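/- For all a, b ∈ F^*, I(b,a) equals the complex conjugate of I(−a,−b). -/

import Mathlib

/-!
The integral over `t` splits over the shells `val t = n`; on each shell the integrand is constant
in `t`, and only `0 ≤ n ≤ min (val a) (val b)` contribute. For such `n` the remaining conditions
force `bx, ay ∈ O` (`integral_of_conds`, using that `1 - ρ` is a unit), so `z, y, x, s` all lie in
`𝔭^(-L)` with `L = val a + val b`; moreover conditions and phase only depend on the variables
modulo `𝔭^(2L)`. Hence `I(a,b)` is a finite sum over representatives of `𝔭^(-L)` modulo `𝔭^(2L)`
(`Iab_eq_sum`).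

The phase is affine in `z`, so summing over `z` first is an application of character
orthogonality (`sum_psi`, `zsum`). It replaces the conditions by `x + as, bs - y ∈ 𝔭^(-n)` and
`bx, ay ∈ 𝔭^n`, and the phase by
`x + y - 2axy² + 2bx²y - 2(b²x² - abxy + a²y²)s`.
Under `(a, b; y, x, s) ↦ (-b, -a; -x, -y, -s)` the conditions are preserved and the phase changes
sign; as `ψ` is unitary (`conj_psi`), this is the functional equation (`total_symm`).

The σ-algebra on `F` is arbitrary and the measures are only assumed invariant, so measurability
of balls and shells is not automatic. By invariance, either all balls are null-measurable or none
is, and likewise for the shells. If no ball, or no shell, is null-measurable, the corresponding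
inner integrand is never almost everywhere strongly measurable unless it vanishes, so the Bochner
integrals are `0` and both sides vanish. If balls are null-measurable, comparing the measures of
`𝔭^j` and `𝔭^(j+1)` shows that the quotient is finite of order `q`, which gives the
representatives (`exists_reps`), the fact that `2` and `3` are units (`unit_two`, `unit_three`)
and the unitarity of `ψ`.
-/

open MeasureTheory
open Classical

noncomputable section

/-- The ambient setting: a nonarchimedean local field `F` whose residue field has
cardinality `q` and characteristic `p > 3`, containing a primitive cube root of
unity `ρ`, with normalized valuation `val`, uniformizer `ϖ`, an additive character
`ψ` which is trivial on the ring of integers `O` and nontrivial on `𝔭⁻¹`, an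
additive Haar measure `μ` normalized by `μ(O) = 1` (so `μ(𝔭^j) = q^{-j}`), and a
multiplicative Haar measure `μs` on `F^*` normalized by `μs(O^*) = 1`. -/
structure CubicSetup (F : Type*) [Field F] [MeasurableSpace F] where
  q : ℕ
  val : F → ℤ
  ϖ : F
  ρ : F
  ψ : F → ℂ
  μ : Measure F
  μs : Measure F
  residue_char : ∃ p f : ℕ, p.Prime ∧ 3 < p ∧ 0 < f ∧ q = p ^ f
  val_mul : ∀ x y : F, x ≠ 0 → y ≠ 0 → val (x * y) = val x + val y
  val_add : ∀ x y : F, x ≠ 0 → y ≠ 0 → x + y ≠ 0 → min (val x) (val y) ≤ val (x + y)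
  uniformizer_ne_zero : ϖ ≠ 0
  val_uniformizer : val ϖ = 1
  val_surjective : ∀ n : ℤ, ∃ x : F, x ≠ 0 ∧ val x = n
  rho_prim_cubic : ρ ^ 2 + ρ + 1 = 0
  psi_add : ∀ x y : F, ψ (x + y) = ψ x * ψ y
  psi_trivial_on_O : ∀ x : F, x ≠ 0 → 0 ≤ val x → ψ x = 1
  psi_zero : ψ 0 = 1
  psi_nontrivial : ∃ x : F, x ≠ 0 ∧ -1 ≤ val x ∧ ψ x ≠ 1
  mu_add_invariant : ∀ (a : F) (s : Set F), μ ((a + ·) ⁻¹' s) = μ s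
  mu_ball : ∀ j : ℤ, μ {x : F | x = 0 ∨ j ≤ val x} = ENNReal.ofReal ((q : ℝ) ^ (-j))
  mus_mul_invariant : ∀ a : F, a ≠ 0 → ∀ s : Set F, μs ((a * ·) ⁻¹' s) = μs s
  mus_units : μs {x : F | x ≠ 0 ∧ val x = 0} = 1
  mus_zero : μs {0} = 0

namespace CubicSetup

variable {F : Type*} [Field F] [MeasurableSpace F] (S : CubicSetup F)

/-- The normalized absolute value `|x| = q^{-val x}` (with `|0| = 0`). -/
def A (x : F) : ℝ := if x = 0 then 0 else (S.q : ℝ) ^ (-S.val x)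

/-- Membership in the ring of integers `O`. -/
def inO (x : F) : Prop := x = 0 ∨ 0 ≤ S.val x

/-- The fractional ideal `𝔭^j = {x : val x ≥ j}`. -/
def pid (j : ℤ) : Set F := {x : F | x = 0 ∨ j ≤ S.val x}

/-- The cubic exponential integral `C(a,b) = ∫_O ψ(ax + bx³) dx`. -/
def Cint (a b : F) : ℂ := ∫ x in S.pid 0, S.ψ (a * x + b * x ^ 3) ∂S.μ

/-- The cubic exponential integral `C_ℓ(a,b) = ∫_{val x = ℓ} ψ(ax + bx³) dx`. -/
def Cl (ℓ : ℤ) (a b : F) : ℂ :=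
  ∫ x in {u : F | u ≠ 0 ∧ S.val u = ℓ}, S.ψ (a * x + b * x ^ 3) ∂S.μ

/-- The cubic exponential integral `C₀(a,b) = ∫_{O^*} ψ(au + bu³) du`. -/
def C0 (a b : F) : ℂ :=
  ∫ u in {x : F | x ≠ 0 ∧ S.val x = 0}, S.ψ (a * u + b * u ^ 3) ∂S.μ

/-- The Kloosterman integral `K(a,b) = ∫_{O^*} ψ(au + bu⁻¹) du`. -/
def Kl (a b : F) : ℂ :=
  ∫ u in {x : F | x ≠ 0 ∧ S.val x = 0}, S.ψ (a * u + b * u⁻¹) ∂S.μ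

/-- `Z` is a complete set of representatives for `𝔭^L` modulo `𝔭^ℓ`. -/
def IsReps (L ℓ : ℤ) (Z : Finset F) : Prop :=
  (∀ z ∈ Z, z ∈ S.pid L) ∧ ∀ x ∈ S.pid L, ∃! z, z ∈ Z ∧ x - z ∈ S.pid ℓ

/-- `R` is a complete set of representatives of `O^*` for the units of the
residue field `(O/𝔭)^*`. -/
def IsUnitReps (R : Finset F) : Prop :=
  (∀ r ∈ R, r ≠ 0 ∧ S.val r = 0) ∧
    ∀ x : F, x ≠ 0 → S.val x = 0 → ∃! r, r ∈ R ∧ x - r ∈ S.pid 1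

/-- The big cell orbital integral `I(a,b)`: the integral over `(x,y,z,s) ∈ F⁴`,
`t ∈ F^*` of the characteristic function of `O^8` evaluated at
`(0, t, t⁻¹a, t(x+as), t⁻¹b, t(bs−y), t⁻¹(xb+yρ²a), t[(xb+yρ²a)s−(xy+zρ)])`,
times `|t|² ψ[x + y + 2a(xy−z)yρ² − 2bxzρ]`, w.r.t. `d*t ds dx dy dz`. -/
def Iab (a b : F) : ℂ :=
  ∫ z, (∫ y, (∫ x, (∫ s, (∫ t,
    (if S.inO (0 : F) ∧ S.inO t ∧ S.inO (t⁻¹ * a) ∧ S.inO (t * (x + a * s)) ∧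
        S.inO (t⁻¹ * b) ∧ S.inO (t * (b * s - y)) ∧
        S.inO (t⁻¹ * (x * b + y * S.ρ ^ 2 * a)) ∧
        S.inO (t * ((x * b + y * S.ρ ^ 2 * a) * s - (x * y + z * S.ρ)))
      then ((S.A t : ℂ) ^ 2) *
          S.ψ (x + y + 2 * a * (x * y - z) * y * S.ρ ^ 2 - 2 * b * x * z * S.ρ)
      else 0) ∂S.μs) ∂S.μ) ∂S.μ) ∂S.μ) ∂S.μ

/-- The integral `I(j; a, b)`. -/
def Ij (j : ℤ) (a b : F) : ℂ :=
  (S.q : ℂ) ^ (-(2 * j)) *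
    ∫ z, (∫ y, (∫ x, (∫ s,
      (if x + a * s ∈ S.pid (-j) ∧ y - b * s ∈ S.pid (-j) ∧
          (x * b + y * S.ρ ^ 2 * a) * s - (x * y + z * S.ρ) ∈ S.pid (-j) ∧
          x * b + y * S.ρ ^ 2 * a ∈ S.pid j
        then S.ψ (x + y + 2 * a * S.ρ ^ 2 * x * y ^ 2 -
            (2 * S.ρ * b * x + 2 * S.ρ ^ 2 * a * y) * z)
        else 0) ∂S.μ) ∂S.μ) ∂S.μ) ∂S.μ

/-- The domain `D_j(a,b) = {(x,y) : bx − ρay ∈ a𝔭^{-j}, bx ∈ 𝔭^j, ay ∈ 𝔭^j,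
y(bx+ay) ∈ 𝔭^j}`. -/
def Dset (j : ℤ) (a b : F) : Set (F × F) :=
  {p : F × F | a⁻¹ * (b * p.1 - S.ρ * a * p.2) ∈ S.pid (-j) ∧ b * p.1 ∈ S.pid j ∧
    a * p.2 ∈ S.pid j ∧ p.2 * (b * p.1 + a * p.2) ∈ S.pid j}

/-- The common integrand `ψ[(1 − ρa⁻¹b)x − (1+2ρ)y + 2a⁻¹b²x³]`. -/
def integrand (a b x y : F) : ℂ :=
  S.ψ ((1 - S.ρ * a⁻¹ * b) * x - (1 + 2 * S.ρ) * y + 2 * a⁻¹ * b ^ 2 * x ^ 3)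

/-- `I₁^{(j)}(a,b)`: the part of the integral with `y ∈ 𝔭^{-m}`, where
`m = min(j, val(a)−j, ⌊(val(a)−j)/2⌋)`. -/
def I1j (j : ℤ) (a b : F) : ℂ :=
  ((S.A a : ℂ))⁻¹ * ∫ y, (∫ x,
    (if (x, y) ∈ S.Dset j a b ∧
        y ∈ S.pid (-(min j (min (S.val a - j) ((S.val a - j) / 2))))
      then S.integrand a b x y else 0) ∂S.μ) ∂S.μ

/-- `I₂^{(j)}(a,b)`: the part of the integral with `y ∉ 𝔭^{-j}`. -/
def I2j (j : ℤ) (a b : F) : ℂ :=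
  ((S.A a : ℂ))⁻¹ * ∫ y, (∫ x,
    (if (x, y) ∈ S.Dset j a b ∧ y ∉ S.pid (-j)
      then S.integrand a b x y else 0) ∂S.μ) ∂S.μ

/-- `I₃^{(j)}(a,b)`: the part of the integral with `y ∈ 𝔭^{-j}` and `ay² ∉ 𝔭^j`. -/
def I3j (j : ℤ) (a b : F) : ℂ :=
  ((S.A a : ℂ))⁻¹ * ∫ y, (∫ x,
    (if (x, y) ∈ S.Dset j a b ∧ y ∈ S.pid (-j) ∧ a * y ^ 2 ∉ S.pid j
      then S.integrand a b x y else 0) ∂S.μ) ∂S.μ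

/-- `G_j^ℓ(a,b) = ∫∫_{Γ_j} ψ(ϖ^ℓ b⁻¹ x − 27⁻¹ ϖ^{3ℓ} a⁻¹b⁻¹ x³ + ϖ^ℓ a⁻¹ y) dx dy`. -/
def Gint (j ℓ : ℤ) (a b : F) : ℂ :=
  ∫ y, (∫ x,
    (if S.inO x ∧ S.inO y ∧ a⁻¹ * (x ^ 3 - y ^ 3) ∈ S.pid (-j)
      then S.ψ (S.ϖ ^ ℓ * b⁻¹ * x - (27 : F)⁻¹ * S.ϖ ^ (3 * ℓ) * a⁻¹ * b⁻¹ * x ^ 3 +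
          S.ϖ ^ ℓ * a⁻¹ * y)
      else 0) ∂S.μ) ∂S.μ

/-- `Γ_j = {(x,y) ∈ O × O : x³ − y³ ∈ a𝔭^{-j}}`. -/
def Gamma (a : F) (j : ℤ) : Set (F × F) :=
  {p : F × F | S.inO p.1 ∧ S.inO p.2 ∧ a⁻¹ * (p.1 ^ 3 - p.2 ^ 3) ∈ S.pid (-j)}

/-- `𝔭^{⌈m/3⌉} × 𝔭^{⌈m/3⌉}`. -/
def Ball (m : ℤ) : Set (F × F) := S.pid (-((-m) / 3)) ×ˢ S.pid (-((-m) / 3))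

/-- `{(x,y) : |x| = q^{-n}, y ∈ ρ^k x + 𝔭^{m−2n}}`. -/
def Ann (m n : ℤ) (k : ℕ) : Set (F × F) :=
  {p : F × F | p.1 ≠ 0 ∧ S.val p.1 = n ∧ p.2 - S.ρ ^ k * p.1 ∈ S.pid (m - 2 * n)}

/-- The degenerate orbital integral `I₁(a)`, integrated w.r.t. `dx dy dz d*t`. -/
def Ione (a : F) : ℂ :=
  ∫ t, (∫ z, (∫ y, (∫ x,
    (if S.inO t ∧ S.inO (t * (a + x)) ∧ S.inO (a ^ (-2 : ℤ) * t⁻¹) ∧ S.inO (t * y) ∧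
        S.inO (a ^ (-2 : ℤ) * t⁻¹ * x) ∧
        S.inO (t * (S.ρ * a * y - S.ρ ^ 2 * x * y - z))
      then ((S.A t : ℂ) ^ 2) *
          S.ψ (-(S.ρ * a⁻¹ * x * y) - S.ρ ^ 2 * a⁻¹ * z + a ^ (-2 : ℤ) * x * z + x + y)
      else 0) ∂S.μ) ∂S.μ) ∂S.μ) ∂S.μs

/-- The degenerate orbital integral `I₂(a)`, integrated w.r.t. `dx dy dz d*t`. -/
def Itwo (a : F) : ℂ :=
  ∫ t, (∫ z, (∫ y, (∫ x,
    (if S.inO t ∧ S.inO (a ^ (-2 : ℤ) * t⁻¹) ∧ S.inO (t * x) ∧ S.inO (t * (a - y)) ∧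
        S.inO (a ^ (-2 : ℤ) * t⁻¹ * y) ∧ S.inO (t * (x * a - x * y - z * S.ρ))
      then ((S.A t : ℂ) ^ 2) *
          S.ψ (a ^ (-2 : ℤ) * (x * y - z) * y - S.ρ * (x * y * S.ρ ^ 2 + z) * a⁻¹ + x + y)
      else 0) ∂S.μ) ∂S.μ) ∂S.μ) ∂S.μs


/-! ### The filtration by fractional ideals -/

lemma mem_pid {j : ℤ} {x : F} : x ∈ S.pid j ↔ x = 0 ∨ j ≤ S.val x := Iff.rfl

lemma zero_mem_pid (j : ℤ) : (0 : F) ∈ S.pid j := Or.inl rfl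

lemma val_one : S.val 1 = 0 := by
  have := S.val_mul 1 1 one_ne_zero one_ne_zero
  rw [one_mul] at this
  omega

lemma val_neg (x : F) : S.val (-x) = S.val x := by
  have h1 : S.val (-1) = 0 := by
    have := S.val_mul (-1) (-1) (by simp) (by simp)
    rw [neg_mul_neg, one_mul, S.val_one] at this
    omega
  by_cases hx : x = 0
  · simp [hx]
  · have := S.val_mul (-1) x (by simp) hx
    rw [neg_one_mul] at this
    omega

lemma val_inv {x : F} (hx : x ≠ 0) : S.val x⁻¹ = - S.val x := by
  have := S.val_mul x x⁻¹ hx (inv_ne_zero hx)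
  rw [mul_inv_cancel₀ hx, S.val_one] at this
  omega

variable {S} in
lemma pid_mono {i j : ℤ} (h : j ≤ i) {x : F} (hx : x ∈ S.pid i) : x ∈ S.pid j :=
  hx.imp id fun h' => h.trans h'

variable {S} in
lemma pid_neg {i : ℤ} {x : F} (hx : x ∈ S.pid i) : -x ∈ S.pid i := by
  rcases hx with hx | hx
  · left; simp [hx]
  · right; rwa [S.val_neg]

lemma pid_neg_iff {i : ℤ} {x : F} : -x ∈ S.pid i ↔ x ∈ S.pid i :=
  ⟨fun h => by simpa using pid_neg h, pid_neg⟩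

variable {S} in
lemma pid_add {i : ℤ} {x y : F} (hx : x ∈ S.pid i) (hy : y ∈ S.pid i) : x + y ∈ S.pid i := by
  by_cases h0 : x = 0
  · simpa [h0] using hy
  by_cases h1 : y = 0
  · simpa [h1] using hx
  by_cases h2 : x + y = 0
  · exact Or.inl h2
  have hx' : i ≤ S.val x := hx.resolve_left h0
  have hy' : i ≤ S.val y := hy.resolve_left h1
  exact Or.inr ((le_min hx' hy').trans (S.val_add x y h0 h1 h2))

variable {S} in
lemma pid_sub {i : ℤ} {x y : F} (hx : x ∈ S.pid i) (hy : y ∈ S.pid i) : x - y ∈ S.pid i := by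
  rw [sub_eq_add_neg]; exact pid_add hx (pid_neg hy)

variable {S} in
lemma pid_mul {i j : ℤ} {x y : F} (hx : x ∈ S.pid i) (hy : y ∈ S.pid j) :
    x * y ∈ S.pid (i + j) := by
  by_cases h0 : x = 0
  · simp [h0, zero_mem_pid]
  by_cases h1 : y = 0
  · simp [h1, zero_mem_pid]
  have hx' : i ≤ S.val x := hx.resolve_left h0
  have hy' : j ≤ S.val y := hy.resolve_left h1
  right
  rw [S.val_mul x y h0 h1]
  omega

lemma mul_mem_pid_iff {c : F} (hc : c ≠ 0) {i : ℤ} {x : F} :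
    c * x ∈ S.pid i ↔ x ∈ S.pid (i - S.val c) := by
  by_cases hx : x = 0
  · simp [hx, zero_mem_pid]
  simp only [mem_pid, mul_eq_zero, hc, hx, false_or, S.val_mul c x hc hx]
  constructor <;> intro h <;> omega

lemma one_mem_pid : (1 : F) ∈ S.pid 0 := Or.inr S.val_one.ge

lemma natCast_mem_pid (n : ℕ) : (n : F) ∈ S.pid 0 := by
  induction n with
  | zero => simp [zero_mem_pid]
  | succ n ih => push_cast; exact pid_add ih S.one_mem_pid

lemma two_mem_pid : (2 : F) ∈ S.pid 0 := by exact_mod_cast S.natCast_mem_pid 2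

lemma self_mem_pid (x : F) : x ∈ S.pid (S.val x) := Or.inr le_rfl

lemma rho_cube : S.ρ ^ 3 = 1 := by linear_combination (S.ρ - 1) * S.rho_prim_cubic

lemma rho_ne_zero : S.ρ ≠ 0 := by
  intro h
  have := S.rho_prim_cubic
  rw [h] at this
  simp at this

lemma val_rho : S.val S.ρ = 0 := by
  have h0 := S.rho_ne_zero
  have h1 := S.val_mul S.ρ (S.ρ * S.ρ) h0 (mul_ne_zero h0 h0)
  rw [S.val_mul _ _ h0 h0, show S.ρ * (S.ρ * S.ρ) = 1 by linear_combination S.rho_cube,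
    S.val_one] at h1
  omega

lemma rho_mem_pid : S.ρ ∈ S.pid 0 := Or.inr S.val_rho.ge

lemma rho_sq_mem_pid : S.ρ ^ 2 ∈ S.pid 0 := by
  rw [sq]; simpa using pid_mul S.rho_mem_pid S.rho_mem_pid

lemma one_lt_q : 1 < S.q := by
  obtain ⟨p, f, hp, h3, hf, h⟩ := S.residue_char
  rw [h]
  exact Nat.one_lt_pow hf.ne' hp.one_lt

lemma q_pos : (0 : ℝ) < S.q := by exact_mod_cast zero_lt_one.trans S.one_lt_q

lemma psi_of_mem {x : F} (hx : x ∈ S.pid 0) : S.ψ x = 1 := by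
  by_cases h : x = 0
  · rw [h, S.psi_zero]
  · exact S.psi_trivial_on_O x h (hx.resolve_left h)

lemma psi_ne_zero (x : F) : S.ψ x ≠ 0 := by
  intro h
  have := S.psi_add x (-x)
  rw [add_neg_cancel, S.psi_zero, h, zero_mul] at this
  exact one_ne_zero this

lemma psi_congr {x y : F} (h : x - y ∈ S.pid 0) : S.ψ x = S.ψ y := by
  have := S.psi_add (x - y) y
  rwa [sub_add_cancel, S.psi_of_mem h, one_mul] at this

/-- `ψ` has conductor exactly `O`. -/
lemma psi_conductor {c : F} {n : ℤ} (h : ∀ u ∈ S.pid (-n), S.ψ (c * u) = 1) : c ∈ S.pid n := by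
  by_contra hc
  have hc0 : c ≠ 0 := fun h => hc (Or.inl h)
  have hcn : S.val c < n := by
    by_contra h'
    exact hc (Or.inr (not_lt.1 h'))
  obtain ⟨x, hx, hv, hψ⟩ := S.psi_nontrivial
  apply hψ
  have := h (c⁻¹ * x) (by
    right
    rw [S.val_mul _ _ (inv_ne_zero hc0) hx, S.val_inv hc0]
    omega)
  rwa [mul_inv_cancel_left₀ hc0] at this

/-! ### Congruence of polynomial expressions -/

/-- `x ≡ x'` modulo `𝔭^(k+d)` for elements of `𝔭^k`; the gap `d` is preserved by products. -/
def Cg (d k : ℤ) (x x' : F) : Prop := x ∈ S.pid k ∧ x' ∈ S.pid k ∧ x - x' ∈ S.pid (k + d)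

variable {S} {d k l : ℤ} {x x' y y' : F}

lemma Cg.symm (h : S.Cg d k x x') : S.Cg d k x' x :=
  ⟨h.2.1, h.1, by simpa using pid_neg h.2.2⟩

lemma Cg.const (h : x ∈ S.pid k) : S.Cg d k x x := ⟨h, h, by simp [zero_mem_pid]⟩

lemma Cg.mono (h : S.Cg d k x x') (hl : l ≤ k) : S.Cg d l x x' :=
  ⟨pid_mono hl h.1, pid_mono hl h.2.1, pid_mono (by omega) h.2.2⟩

lemma Cg.add (h : S.Cg d k x x') (h' : S.Cg d k y y') : S.Cg d k (x + y) (x' + y') :=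
  ⟨pid_add h.1 h'.1, pid_add h.2.1 h'.2.1, by
    rw [add_sub_add_comm]; exact pid_add h.2.2 h'.2.2⟩

lemma Cg.neg (h : S.Cg d k x x') : S.Cg d k (-x) (-x') :=
  ⟨pid_neg h.1, pid_neg h.2.1, by
    rw [← neg_sub']; exact pid_neg h.2.2⟩

lemma Cg.sub (h : S.Cg d k x x') (h' : S.Cg d k y y') : S.Cg d k (x - y) (x' - y') := by
  rw [sub_eq_add_neg, sub_eq_add_neg]; exact h.add h'.neg

lemma Cg.mul (h : S.Cg d k x x') (h' : S.Cg d l y y') : S.Cg d (k + l) (x * y) (x' * y') :=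
  ⟨pid_mul h.1 h'.1, pid_mul h.2.1 h'.2.1, by
    rw [show x * y - x' * y' = x * (y - y') + (x - x') * y' by ring]
    refine pid_add (pid_mono ?_ (pid_mul h.1 h'.2.2)) (pid_mono ?_ (pid_mul h.2.2 h'.2.1)) <;>
      omega⟩

lemma Cg.mem_iff (h : S.Cg d k x x') (hl : l ≤ k + d) : x ∈ S.pid l ↔ x' ∈ S.pid l :=
  ⟨fun hx => by simpa using pid_sub hx (pid_mono hl h.2.2),
    fun hx => by simpa using pid_add hx (pid_mono hl h.2.2)⟩

lemma Cg.psi_eq (h : S.Cg d k x x') (hl : 0 ≤ k + d) : S.ψ x = S.ψ x' :=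
  S.psi_congr (pid_mono hl h.2.2)

variable (S)

/-! ### Null-measurability and invariance -/

/-- The preimage of a null-measurable set of finite measure under a bijection preserving the
outer measure of all sets is null-measurable, although the `σ`-algebra itself need not be
invariant: Carathéodory's criterion passes to the preimage. -/
lemma nullMeasurable_preimage {X : Type*} [MeasurableSpace X] {ν : Measure X} {e : X ≃ X}
    (he : ∀ s : Set X, ν (e ⁻¹' s) = ν s)
    {E : Set X} (hE : NullMeasurableSet E ν) (hfin : ν E ≠ ⊤) :
    NullMeasurableSet (e ⁻¹' E) ν := by
  set C := e ⁻¹' E with hC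
  set H := toMeasurable ν C
  have hCH : C ⊆ H := subset_toMeasurable ν C
  have hνH : ν H = ν C := measure_toMeasurable C
  have key : ν (H ∩ C) + ν (H \ C) = ν H := by
    have h1 := measure_inter_add_sdiff₀ (e '' H) hE
    have h2 : ∀ s : Set X, ν (e '' s) = ν s := fun s => by
      rw [← he (e '' s), Set.preimage_image_eq _ e.injective]
    have hE' : e '' C = E := Set.image_preimage_eq _ e.surjective
    rw [← hE', ← Set.image_inter e.injective, ← Set.image_sdiff e.injective, h2, h2, h2] at h1
    exact h1
  rw [Set.inter_eq_self_of_subset_right hCH, hνH] at key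
  have hCfin : ν C ≠ ⊤ := by rw [hC, he]; exact hfin
  have h0 : ν (H \ C) = 0 := by
    by_contra h
    exact (ENNReal.lt_add_right hCfin h).ne' key
  have : C =ᵐ[ν] H := by
    rw [ae_eq_set]
    exact ⟨by rw [Set.sdiff_eq_empty.2 hCH]; simp, h0⟩
  exact (measurableSet_toMeasurable ν C).nullMeasurableSet.congr this.symm

/-- If finitely many sets cover a null-measurable set with no excess of outer measure, each of
them is null-measurable. -/
lemma nullMeasurable_of_tight {ι X : Type*} [MeasurableSpace X] {ν : Measure X} {E : Set X}
    (hE : NullMeasurableSet E ν) (hfin : ν E ≠ ⊤)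
    {T : Finset ι} {C : ι → Set X}
    (hun : E = ⋃ i ∈ T, C i) (hsum : ∑ i ∈ T, ν (C i) ≤ ν E) {i : ι} (hi : i ∈ T) :
    NullMeasurableSet (C i) ν := by
  have hsub : C i ⊆ E := by rw [hun]; exact Set.subset_biUnion_of_mem hi
  have hdiff : E \ C i ⊆ ⋃ j ∈ T.erase i, C j := by
    rintro x ⟨hx, hxi⟩
    rw [hun] at hx
    simp only [Set.mem_iUnion, Finset.mem_erase] at hx ⊢
    obtain ⟨j, hj, hxj⟩ := hx
    exact ⟨j, ⟨by rintro rfl; exact hxi hxj, hj⟩, hxj⟩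
  have h1 : ν (C i) + ν (E \ C i) ≤ ν E := by
    refine le_trans ?_ hsum
    rw [← Finset.add_sum_erase _ _ hi]
    gcongr
    exact (measure_mono hdiff).trans (measure_biUnion_finset_le _ _)
  set H := toMeasurable ν (C i)
  set H' := toMeasurable ν (E \ C i)
  have hH : C i ⊆ H := subset_toMeasurable _ _
  have hH' : E \ C i ⊆ H' := subset_toMeasurable _ _
  have h2 : ν (H ∪ H') + ν (H ∩ H') = ν H + ν H' :=
    measure_union_add_inter _ (measurableSet_toMeasurable _ _)
  rw [measure_toMeasurable, measure_toMeasurable] at h2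
  have h3 : ν E ≤ ν (H ∪ H') := by
    refine measure_mono fun x hx => ?_
    by_cases hxi : x ∈ C i
    · exact Or.inl (hH hxi)
    · exact Or.inr (hH' ⟨hx, hxi⟩)
  have h4 : ν (H ∩ H') = 0 := by
    by_contra h
    have h5 : ν E < ν E + ν (H ∩ H') := ENNReal.lt_add_right hfin h
    have h6 : ν E + ν (H ∩ H') ≤ ν (H ∪ H') + ν (H ∩ H') := by gcongr
    rw [h2] at h6
    exact absurd (h5.trans_le (h6.trans h1)) (lt_irrefl _)
  have : C i =ᵐ[ν] (H ∩ E : Set X) := by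
    rw [ae_eq_set]
    refine ⟨by rw [Set.sdiff_eq_empty.2 (Set.subset_inter hH hsub)]; simp, ?_⟩
    refine measure_mono_null ?_ h4
    rintro x ⟨⟨hx, hxE⟩, hxi⟩
    exact ⟨hx, hH' ⟨hxE, hxi⟩⟩
  exact (((measurableSet_toMeasurable ν (C i)).nullMeasurableSet).inter hE).congr this.symm

lemma mu_pid (j : ℤ) : S.μ (S.pid j) = ENNReal.ofReal ((S.q : ℝ) ^ (-j)) := S.mu_ball j

lemma mu_pid_ne_top (j : ℤ) : S.μ (S.pid j) ≠ ⊤ := by rw [mu_pid]; exact ENNReal.ofReal_ne_top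

/-- The coset `r + 𝔭^j`. -/
def coset (j : ℤ) (r : F) : Set F := {x | x - r ∈ S.pid j}

lemma coset_eq (j : ℤ) (r : F) : S.coset j r = (-r + ·) ⁻¹' S.pid j := by
  ext x; simp [coset, sub_eq_neg_add]

lemma mu_coset (j : ℤ) (r : F) : S.μ (S.coset j r) = ENNReal.ofReal ((S.q : ℝ) ^ (-j)) := by
  rw [coset_eq, S.mu_add_invariant, mu_pid]

lemma nullMeasurable_coset {j : ℤ} (h : NullMeasurableSet (S.pid j) S.μ) (r : F) :
    NullMeasurableSet (S.coset j r) S.μ := by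
  rw [coset_eq]
  exact nullMeasurable_preimage (e := Equiv.addLeft (-r)) (fun s => S.mu_add_invariant _ s) h
    (S.mu_pid_ne_top j)

lemma nullMeasurable_of_coset {j : ℤ} {r : F} (h : NullMeasurableSet (S.coset j r) S.μ) :
    NullMeasurableSet (S.pid j) S.μ := by
  have : S.pid j = (Equiv.addLeft r) ⁻¹' S.coset j r := by
    ext x; simp [coset]
  rw [this]
  exact nullMeasurable_preimage (fun s => S.mu_add_invariant _ s) h
    (by rw [mu_coset]; exact ENNReal.ofReal_ne_top)

/-! ### Residue classes -/

/-- Finitely many pairwise incongruent classes modulo `𝔭^j` inside `𝔭^(j-1)`: at most `q`. -/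
lemma card_le_of_incongruent {j : ℤ} (h : NullMeasurableSet (S.pid j) S.μ) {T : Finset F}
    (hT : ∀ z ∈ T, z ∈ S.pid (j - 1)) (hinc : ∀ z ∈ T, ∀ w ∈ T, z - w ∈ S.pid j → z = w) :
    T.card ≤ S.q := by
  have hd : (T : Set F).PairwiseDisjoint (S.coset j) := by
    intro z hz w hw hzw
    refine Set.disjoint_left.2 fun x hx hx' => hzw (hinc z hz w hw ?_)
    have := pid_sub (S := S) hx' hx
    simpa using this
  have h1 : S.μ (⋃ r ∈ T, S.coset j r) = ∑ r ∈ T, S.μ (S.coset j r) :=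
    measure_biUnion_finset₀ (fun z hz w hw hzw => (hd hz hw hzw).aedisjoint)
      fun r _ => S.nullMeasurable_coset h r
  have h2 : S.μ (⋃ r ∈ T, S.coset j r) ≤ S.μ (S.pid (j - 1)) := by
    refine measure_mono (Set.iUnion₂_subset fun r hr x hx => ?_)
    have := pid_add (hT r hr) (pid_mono (by omega : j - 1 ≤ j) hx)
    simpa using this
  simp_rw [h1, mu_coset, mu_pid, Finset.sum_const, nsmul_eq_mul] at h2
  have hq := S.q_pos
  rw [← ENNReal.ofReal_natCast, ← ENNReal.ofReal_mul (by positivity),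
    ENNReal.ofReal_le_ofReal_iff (by positivity), show -(j - 1) = 1 + -j by ring,
    zpow_add₀ hq.ne', zpow_one] at h2
  exact_mod_cast le_of_mul_le_mul_right h2 (by positivity)

lemma exists_reps_step {j : ℤ} (h : NullMeasurableSet (S.pid j) S.μ) :
    ∃ R, S.IsReps (j - 1) j R ∧ R.card ≤ S.q := by
  let P : ℕ → Prop := fun k => ∃ T : Finset F, T.card = k ∧ (∀ z ∈ T, z ∈ S.pid (j - 1)) ∧
    ∀ z ∈ T, ∀ w ∈ T, z - w ∈ S.pid j → z = w
  obtain ⟨T, hc, hT, hinc⟩ : P (Nat.findGreatest P S.q) :=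
    Nat.findGreatest_spec (Nat.zero_le _) ⟨∅, by simp⟩
  refine ⟨T, ⟨hT, fun x hx => ?_⟩, hc ▸ Nat.findGreatest_le _⟩
  refine existsUnique_of_exists_of_unique ?_ ?_
  · by_contra hno
    push Not at hno
    have hxT : x ∉ T := fun hxT => hno x hxT (by simp [zero_mem_pid])
    have hT' : ∀ z ∈ insert x T, z ∈ S.pid (j - 1) := by
      intro z hz
      rcases Finset.mem_insert.1 hz with rfl | hz
      exacts [hx, hT z hz]
    have hinc' : ∀ z ∈ insert x T, ∀ w ∈ insert x T, z - w ∈ S.pid j → z = w := by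
      intro z hz w hw hzw
      rcases Finset.mem_insert.1 hz with rfl | hz' <;> rcases Finset.mem_insert.1 hw with rfl | hw'
      · rfl
      · exact absurd hzw (hno w hw')
      · exact absurd (by simpa using pid_neg hzw) (hno z hz')
      · exact hinc z hz' w hw' hzw
    have hle := S.card_le_of_incongruent h hT' hinc'
    have hcard := Finset.card_insert_of_notMem hxT
    have : (insert x T).card ≤ Nat.findGreatest P S.q :=
      Nat.le_findGreatest hle ⟨_, rfl, hT', hinc'⟩
    omega
  · rintro z w ⟨hz, hz'⟩ ⟨hw, hw'⟩
    exact hinc z hz w hw (by simpa using pid_sub hw' hz')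

lemma IsReps.scale {L l : ℤ} {R : Finset F} (h : S.IsReps L l R) {c : F} (hc : c ≠ 0) :
    S.IsReps (L + S.val c) (l + S.val c) (R.image (c * ·)) := by
  have key : ∀ (i : ℤ) (x : F), c * x ∈ S.pid (i + S.val c) ↔ x ∈ S.pid i := fun i x => by
    rw [S.mul_mem_pid_iff hc, add_sub_cancel_right]
  refine ⟨fun z hz => ?_, fun x hx => ?_⟩
  · obtain ⟨r, hr, rfl⟩ := Finset.mem_image.1 hz
    exact (key L r).2 (h.1 r hr)
  · obtain ⟨y, rfl⟩ : ∃ y, x = c * y := ⟨c⁻¹ * x, by rw [mul_inv_cancel_left₀ hc]⟩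
    obtain ⟨r, ⟨hr, hyr⟩, huniq⟩ := h.2 y ((key L y).1 hx)
    refine ⟨c * r, ⟨Finset.mem_image_of_mem _ hr, ?_⟩, ?_⟩
    · rw [← mul_sub]; exact (key l _).2 hyr
    · rintro w ⟨hw, hyw⟩
      obtain ⟨r', hr', rfl⟩ := Finset.mem_image.1 hw
      rw [← mul_sub] at hyw
      simp only [huniq r' ⟨hr', (key l _).1 hyw⟩]

lemma exists_reps_unit {j : ℤ} (h : NullMeasurableSet (S.pid j) S.μ) (i : ℤ) :
    ∃ R, S.IsReps i (i + 1) R ∧ R.card ≤ S.q := by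
  obtain ⟨R, hR, hc⟩ := S.exists_reps_step h
  obtain ⟨c, hc0, hcv⟩ := S.val_surjective (i + 1 - j)
  have := IsReps.scale S hR hc0
  rw [hcv, show j - 1 + (i + 1 - j) = i by ring, show j + (i + 1 - j) = i + 1 by ring] at this
  exact ⟨_, this, Finset.card_image_le.trans hc⟩

lemma exists_reps_le {j : ℤ} (h : NullMeasurableSet (S.pid j) S.μ) (i : ℤ) (k : ℕ) :
    ∃ R, S.IsReps i (i + k) R ∧ R.card ≤ S.q ^ k := by
  induction k with
  | zero =>
    refine ⟨{0}, ⟨by simp [zero_mem_pid], fun x hx => ⟨0, by simpa using hx, ?_⟩⟩, by simp⟩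
    rintro y ⟨hy, -⟩
    simpa using hy
  | succ k ih =>
    obtain ⟨R, hR, hc⟩ := ih
    obtain ⟨R', hR', hc'⟩ := S.exists_reps_unit h (i + k)
    refine ⟨(R ×ˢ R').image fun p => p.1 + p.2, ⟨?_, ?_⟩, ?_⟩
    · intro z hz
      obtain ⟨⟨r, r'⟩, hp, rfl⟩ := Finset.mem_image.1 hz
      obtain ⟨h1, h2⟩ := Finset.mem_product.1 hp
      exact pid_add (hR.1 r h1) (pid_mono (by omega) (hR'.1 r' h2))
    · intro x hx
      obtain ⟨r, ⟨hr, hxr⟩, hu⟩ := hR.2 x hx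
      obtain ⟨r', ⟨hr', hxr'⟩, hu'⟩ := hR'.2 (x - r) hxr
      refine ⟨r + r', ⟨Finset.mem_image.2 ⟨(r, r'), Finset.mem_product.2 ⟨hr, hr'⟩, rfl⟩, ?_⟩, ?_⟩
      · rw [← sub_sub]; push_cast; rwa [← add_assoc]
      · rintro w ⟨hw, hxw⟩
        obtain ⟨⟨t, t'⟩, hp, rfl⟩ := Finset.mem_image.1 hw
        obtain ⟨h1, h2⟩ := Finset.mem_product.1 hp
        dsimp only at h1 h2 hxw ⊢
        have e1 : t = r := hu t ⟨h1, by
          have := pid_add (pid_mono (by push_cast; omega : i + k ≤ i + ↑(k + 1)) hxw) (hR'.1 t' h2)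
          rwa [show x - (t + t') + t' = x - t by ring] at this⟩
        subst e1
        have e2 : t' = r' := hu' t' ⟨h2, by
          rw [sub_sub]; push_cast at hxw; rwa [← add_assoc] at hxw⟩
        rw [e2]
    · refine Finset.card_image_le.trans ?_
      rw [Finset.card_product, pow_succ]
      exact Nat.mul_le_mul hc hc'

lemma IsReps.iUnion {L l : ℤ} {R : Finset F} (h : S.IsReps L l R) (hl : L ≤ l) :
    S.pid L = ⋃ r ∈ R, S.coset l r := by
  ext x
  simp only [Set.mem_iUnion]
  constructor
  · intro hx
    obtain ⟨r, ⟨hr, hxr⟩, -⟩ := h.2 x hx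
    exact ⟨r, hr, hxr⟩
  · rintro ⟨r, hr, hxr⟩
    have := pid_add (pid_mono hl hxr) (h.1 r hr)
    simpa using this

lemma IsReps.disjoint {L l : ℤ} {R : Finset F} (h : S.IsReps L l R) :
    (R : Set F).PairwiseDisjoint (S.coset l) := by
  intro z hz w hw hzw
  refine Set.disjoint_left.2 fun x hx hx' => hzw ?_
  refine (h.2 z (h.1 z hz)).unique ⟨hz, by simp [zero_mem_pid]⟩ ⟨hw, ?_⟩
  have := pid_sub (S := S) hx' hx
  simpa using this

lemma nullMeasurable_all {j : ℤ} (h : NullMeasurableSet (S.pid j) S.μ) (i : ℤ) :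
    NullMeasurableSet (S.pid i) S.μ := by
  rcases le_total i j with hij | hij
  · obtain ⟨R, hR, -⟩ := S.exists_reps_le h i (j - i).toNat
    rw [Int.toNat_of_nonneg (by omega), add_sub_cancel] at hR
    rw [IsReps.iUnion S hR hij]
    exact Finset.nullMeasurableSet_biUnion _ fun r _ => S.nullMeasurable_coset h r
  · obtain ⟨R, hR, hc⟩ := S.exists_reps_le h j (i - j).toNat
    have hk : ((i - j).toNat : ℤ) = i - j := Int.toNat_of_nonneg (by omega)
    rw [hk, add_sub_cancel] at hR
    obtain ⟨r, ⟨hr, -⟩, -⟩ := hR.2 0 (S.zero_mem_pid _)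
    refine S.nullMeasurable_of_coset (r := r) (nullMeasurable_of_tight h (S.mu_pid_ne_top j)
      (IsReps.iUnion S hR hij) ?_ hr)
    have hq := S.q_pos
    simp_rw [mu_coset, mu_pid, Finset.sum_const, nsmul_eq_mul]
    rw [← ENNReal.ofReal_natCast, ← ENNReal.ofReal_mul (by positivity)]
    apply ENNReal.ofReal_le_ofReal
    have : (R.card : ℝ) ≤ (S.q : ℝ) ^ (i - j) := by
      rw [← hk, zpow_natCast]; exact_mod_cast hc
    calc (R.card : ℝ) * (S.q : ℝ) ^ (-i) ≤ (S.q : ℝ) ^ (i - j) * (S.q : ℝ) ^ (-i) := by gcongr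
      _ = (S.q : ℝ) ^ (-j) := by rw [← zpow_add₀ hq.ne']; congr 1; ring

lemma exists_reps {j : ℤ} (h : NullMeasurableSet (S.pid j) S.μ) {L l : ℤ} (hl : L ≤ l) :
    ∃ R, S.IsReps L l R := by
  obtain ⟨R, hR, -⟩ := S.exists_reps_le h L (l - L).toNat
  rw [Int.toNat_of_nonneg (by omega), add_sub_cancel] at hR
  exact ⟨R, hR⟩

/-! ### Sums over representatives -/

/-- A map inducing a permutation of `𝔭^L / 𝔭^l` preserves sums of `𝔭^l`-periodic functions. -/
lemma IsReps.sum_comp {T : Type*} [AddCommMonoid T] {L l : ℤ} {R : Finset F}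
    (h : S.IsReps L l R) (φ : F → F) (hφ : ∀ x ∈ S.pid L, φ x ∈ S.pid L)
    (hφ' : ∀ x ∈ S.pid L, ∀ y ∈ S.pid L, φ x - φ y ∈ S.pid l → x - y ∈ S.pid l) (f : F → T)
    (hf : ∀ x ∈ S.pid L, ∀ y ∈ S.pid L, x - y ∈ S.pid l → f x = f y) :
    ∑ r ∈ R, f (φ r) = ∑ r ∈ R, f r := by
  choose! ρ hρ using fun x (hx : x ∈ S.pid L) => (h.2 x hx).exists
  have hmem : ∀ r ∈ R, φ r ∈ S.pid L := fun r hr => hφ r (h.1 r hr)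
  have hmaps : Set.MapsTo (fun r => ρ (φ r)) (R : Set F) R := fun r hr => (hρ _ (hmem r hr)).1
  have hinj : Set.InjOn (fun r => ρ (φ r)) (R : Set F) := by
    intro r hr s hs hrs
    have h1 := (hρ _ (hmem r hr)).2
    have h2 := (hρ _ (hmem s hs)).2
    dsimp only at hrs
    rw [hrs] at h1
    have h3 := hφ' r (h.1 r hr) s (h.1 s hs) (by simpa using pid_sub h1 h2)
    exact (h.2 r (h.1 r hr)).unique ⟨hr, by simp [zero_mem_pid]⟩ ⟨hs, h3⟩
  refine Finset.sum_nbij (fun r => ρ (φ r)) hmaps hinj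
    (Finset.surjOn_of_injOn_of_card_le _ hmaps hinj le_rfl) fun r hr => ?_
  exact hf _ (hmem r hr) _ (h.1 _ (hmaps hr)) (hρ _ (hmem r hr)).2

lemma IsReps.sum_add {T : Type*} [AddCommMonoid T] {L l : ℤ} {R : Finset F}
    (h : S.IsReps L l R) {c : F} (hc : c ∈ S.pid L) (f : F → T)
    (hf : ∀ x ∈ S.pid L, ∀ y ∈ S.pid L, x - y ∈ S.pid l → f x = f y) :
    ∑ r ∈ R, f (r + c) = ∑ r ∈ R, f r :=
  IsReps.sum_comp S h (· + c) (fun _ hx => pid_add hx hc)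
    (fun x _ y _ hxy => by simpa using hxy) f hf

lemma IsReps.sum_neg {T : Type*} [AddCommMonoid T] {L l : ℤ} {R : Finset F}
    (h : S.IsReps L l R) (f : F → T)
    (hf : ∀ x ∈ S.pid L, ∀ y ∈ S.pid L, x - y ∈ S.pid l → f x = f y) :
    ∑ r ∈ R, f (-r) = ∑ r ∈ R, f r :=
  IsReps.sum_comp S h (- ·) (fun _ hx => pid_neg hx)
    (fun x _ y _ hxy => by
      rw [← neg_sub'] at hxy; exact S.pid_neg_iff.1 hxy) f hf

/-- The integral of a `𝔭^l`-periodic function supported in `𝔭^L` is a finite sum. -/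
lemma IsReps.integral_eq {j : ℤ} (hm : NullMeasurableSet (S.pid j) S.μ) {L l : ℤ} {R : Finset F}
    (h : S.IsReps L l R) (hl : L ≤ l) (f : F → ℂ) (hsupp : ∀ x ∉ S.pid L, f x = 0)
    (hf : ∀ x ∈ S.pid L, ∀ y ∈ S.pid L, x - y ∈ S.pid l → f x = f y) :
    ∫ x, f x ∂S.μ = (((S.q : ℝ) ^ (-l) : ℝ) : ℂ) * ∑ r ∈ R, f r := by
  have hnm : ∀ r, NullMeasurableSet (S.coset l r) S.μ :=
    fun r => S.nullMeasurable_coset (S.nullMeasurable_all hm l) r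
  have hfun : f = fun x => ∑ r ∈ R, (S.coset l r).indicator (fun _ => f r) x := by
    ext x
    by_cases hx : x ∈ S.pid L
    · obtain ⟨r, ⟨hr, hxr⟩, hu⟩ := h.2 x hx
      rw [Finset.sum_eq_single_of_mem r hr]
      · rw [Set.indicator_of_mem (show x ∈ S.coset l r from hxr)]
        exact hf x hx r (h.1 r hr) hxr
      · intro s hs hsr
        have hxs : x ∉ S.coset l s := fun hxs => hsr (hu s ⟨hs, hxs⟩)
        exact Set.indicator_of_notMem hxs _
    · rw [hsupp x hx]
      refine (Finset.sum_eq_zero fun r hr => ?_).symm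
      have hxr : x ∉ S.coset l r := fun hxr => hx (by
        rw [IsReps.iUnion S h hl]
        exact Set.mem_biUnion hr hxr)
      exact Set.indicator_of_notMem hxr _
  have hfin : ∀ r, S.μ (S.coset l r) ≠ ⊤ := fun r => by
    rw [mu_coset]; exact ENNReal.ofReal_ne_top
  have hint : ∀ r ∈ R, Integrable ((S.coset l r).indicator fun _ => f r) S.μ := fun r _ =>
    IntegrableOn.integrable_indicator₀ (integrableOn_const (hfin r)) (hnm r)
  rw [hfun, integral_finsetSum _ hint, ← hfun, Finset.mul_sum]
  refine Finset.sum_congr rfl fun r _ => ?_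
  have hq := S.q_pos
  rw [integral_indicator₀ (hnm r), setIntegral_const, measureReal_def, mu_coset,
    ENNReal.toReal_ofReal (by positivity), Complex.real_smul]

/-! ### Consequences for the residue field and the character -/

lemma card_reps_one {j : ℤ} (hm : NullMeasurableSet (S.pid j) S.μ) {R : Finset F}
    (h : S.IsReps 0 1 R) : R.card = S.q := by
  have h1 := congrArg S.μ (IsReps.iUnion S h zero_le_one)
  rw [measure_biUnion_finset₀ (fun z hz w hw hzw => (IsReps.disjoint S h hz hw hzw).aedisjoint)
      fun r _ => S.nullMeasurable_coset (S.nullMeasurable_all hm 1) r] at h1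
  have hq := S.q_pos
  simp_rw [mu_coset, mu_pid, Finset.sum_const, nsmul_eq_mul] at h1
  rw [← ENNReal.ofReal_natCast, ← ENNReal.ofReal_mul (by positivity),
    ENNReal.ofReal_eq_ofReal_iff (by positivity) (by positivity)] at h1
  rw [neg_zero, zpow_zero, zpow_neg, zpow_one, eq_mul_inv_iff_mul_eq₀ hq.ne', one_mul] at h1
  exact_mod_cast h1.symm

/-- The residue field has `q` elements, so translation by `1` permutes its elements, and summing
them shows that `q` vanishes in it. -/
lemma q_mem_pid {j : ℤ} (hm : NullMeasurableSet (S.pid j) S.μ) : (S.q : F) ∈ S.pid 1 := by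
  obtain ⟨R, h⟩ := S.exists_reps hm (zero_le_one : (0 : ℤ) ≤ 1)
  let P : AddSubgroup F :=
    { carrier := S.pid 1
      zero_mem' := S.zero_mem_pid 1
      add_mem' := pid_add
      neg_mem' := pid_neg }
  have h1 := IsReps.sum_add S h S.one_mem_pid (fun x => (QuotientAddGroup.mk x : F ⧸ P))
    (fun x _ y _ hxy => by
      rw [QuotientAddGroup.eq]
      have := pid_neg hxy
      rwa [neg_sub, sub_eq_neg_add] at this)
  simp only [QuotientAddGroup.mk_add, Finset.sum_add_distrib, Finset.sum_const,
    add_eq_left, S.card_reps_one hm h] at h1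
  rw [← QuotientAddGroup.mk_nsmul, QuotientAddGroup.eq_zero_iff, nsmul_one] at h1
  exact h1

lemma unit_of_coprime {j : ℤ} (hm : NullMeasurableSet (S.pid j) S.μ) {m : ℕ}
    (hco : Nat.Coprime m S.q) : (m : F) ≠ 0 ∧ S.val (m : F) = 0 := by
  have hnot : (m : F) ∉ S.pid 1 := by
    intro hmem
    have hb : (1 : F) = m * (m.gcdA S.q : F) + S.q * (m.gcdB S.q : F) := by
      have := Nat.gcd_eq_gcd_ab m S.q
      rw [hco] at this
      exact_mod_cast congrArg (Int.cast : ℤ → F) this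
    have hint : ∀ n : ℤ, (n : F) ∈ S.pid 0 := fun n => by
      rcases Int.eq_nat_or_neg n with ⟨k, rfl | rfl⟩
      · exact_mod_cast S.natCast_mem_pid k
      · push_cast; exact pid_neg (S.natCast_mem_pid k)
    have h1 : (1 : F) ∈ S.pid 1 := by
      rw [hb]
      exact pid_add (by simpa using pid_mul hmem (hint _))
        (by simpa using pid_mul (S.q_mem_pid hm) (hint _))
    rcases h1 with h1 | h1
    · exact one_ne_zero h1
    · rw [S.val_one] at h1; omega
  have h0 : (m : F) ≠ 0 := fun h => hnot (Or.inl h)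
  refine ⟨h0, le_antisymm ?_ ((S.natCast_mem_pid m).resolve_left h0)⟩
  by_contra h
  exact hnot (Or.inr (by omega))

lemma unit_two {j : ℤ} (hm : NullMeasurableSet (S.pid j) S.μ) :
    (2 : F) ≠ 0 ∧ S.val (2 : F) = 0 := by
  obtain ⟨p, f, hp, h3, hf, h⟩ := S.residue_char
  have := S.unit_of_coprime hm (m := 2) (by
    rw [h]
    exact Nat.Coprime.pow_right f ((Nat.coprime_primes Nat.prime_two hp).2 (by omega)))
  exact_mod_cast this

lemma unit_three {j : ℤ} (hm : NullMeasurableSet (S.pid j) S.μ) :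
    (3 : F) ≠ 0 ∧ S.val (3 : F) = 0 := by
  obtain ⟨p, f, hp, h3, hf, h⟩ := S.residue_char
  have := S.unit_of_coprime hm (m := 3) (by
    rw [h]
    exact Nat.Coprime.pow_right f ((Nat.coprime_primes Nat.prime_three hp).2 (by omega)))
  exact_mod_cast this

/-- The character is unitary, because its values are roots of unity of `q`-power order. -/
lemma conj_psi {j : ℤ} (hm : NullMeasurableSet (S.pid j) S.μ) (x : F) :
    (starRingEnd ℂ) (S.ψ x) = S.ψ (-x) := by
  have hpow : ∀ n : ℕ, S.ψ (n * x) = S.ψ x ^ n := by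
    intro n
    induction n with
    | zero => simp [S.psi_zero]
    | succ n ih => rw [Nat.cast_succ, add_mul, one_mul, S.psi_add, ih, pow_succ]
  have hqpow : ∀ n : ℕ, (S.q : F) ^ n ∈ S.pid n := by
    intro n
    induction n with
    | zero => simpa using S.one_mem_pid
    | succ n ih => rw [pow_succ]; push_cast; exact pid_mul ih (S.q_mem_pid hm)
  set k := (-S.val x).toNat
  have h1 : S.ψ x ^ (S.q ^ k) = 1 := by
    rw [← hpow]
    refine S.psi_of_mem (pid_mono (by omega) (pid_mul ?_ (S.self_mem_pid x)) (i := k + S.val x))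
    push_cast
    exact hqpow k
  have hn : ‖S.ψ x‖ = 1 :=
    Complex.norm_eq_one_of_pow_eq_one h1 (pow_ne_zero _ (zero_lt_one.trans S.one_lt_q).ne')
  have h2 := S.psi_add x (-x)
  rw [add_neg_cancel, S.psi_zero] at h2
  rw [← Complex.inv_eq_conj hn]
  exact (eq_inv_of_mul_eq_one_right h2.symm).symm

/-! ### The integral over the torus variable -/

/-- The argument of `ψ` in `Iab`. -/
def phase (a b z y x : F) : F :=
  x + y + 2 * a * (x * y - z) * y * S.ρ ^ 2 - 2 * b * x * z * S.ρ

/-- The integrality conditions in `Iab` on `(z, y, x, s)` for `val t = n`. -/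
def Cond (a b : F) (n : ℤ) (z y x s : F) : Prop :=
  x + a * s ∈ S.pid (-n) ∧ b * s - y ∈ S.pid (-n) ∧ x * b + y * S.ρ ^ 2 * a ∈ S.pid n ∧
    (x * b + y * S.ρ ^ 2 * a) * s - (x * y + z * S.ρ) ∈ S.pid (-n)

/-- The integrand of `Iab`. -/
def tInt (a b z y x s t : F) : ℂ :=
  if S.inO (0 : F) ∧ S.inO t ∧ S.inO (t⁻¹ * a) ∧ S.inO (t * (x + a * s)) ∧
        S.inO (t⁻¹ * b) ∧ S.inO (t * (b * s - y)) ∧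
        S.inO (t⁻¹ * (x * b + y * S.ρ ^ 2 * a)) ∧
        S.inO (t * ((x * b + y * S.ρ ^ 2 * a) * s - (x * y + z * S.ρ)))
      then ((S.A t : ℂ) ^ 2) *
          S.ψ (x + y + 2 * a * (x * y - z) * y * S.ρ ^ 2 - 2 * b * x * z * S.ρ)
      else 0

/-- The range of valuations `n = val t` allowed by `t, t⁻¹a, t⁻¹b ∈ O`. -/
def range (a b : F) : Finset ℤ := Finset.Icc 0 (min (S.val a) (S.val b))

/-- The sum over the shells `val t = n` replacing the integral over `t`. -/
def tSum (a b z y x s : F) : ℂ :=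
  ((∑ n ∈ S.range a b, if S.Cond a b n z y x s then ((S.q : ℝ) ^ (-n)) ^ 2 else 0 : ℝ) : ℂ) *
    S.ψ (S.phase a b z y x)

/-- The shell of elements of valuation `n`. -/
def shell (n : ℤ) : Set F := {x | x ≠ 0 ∧ S.val x = n}

lemma mu_shell (n : ℤ) : S.μs (S.shell n) = 1 := by
  obtain ⟨c, hc, hv⟩ := S.val_surjective (-n)
  have : S.shell n = (c * ·) ⁻¹' {x : F | x ≠ 0 ∧ S.val x = 0} := by
    ext x
    by_cases hx : x = 0
    · simp [shell, hx]
    · simp only [shell, Set.mem_ofPred_eq, Set.mem_preimage, S.val_mul c x hc hx, hv, ne_eq,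
        mul_eq_zero, hc, hx, or_self, not_false_eq_true, true_and]
      omega
  rw [this, S.mus_mul_invariant c hc, S.mus_units]

lemma nullMeasurable_shell {n : ℤ} (h : NullMeasurableSet (S.shell n) S.μs) (m : ℤ) :
    NullMeasurableSet (S.shell m) S.μs := by
  obtain ⟨c, hc, hv⟩ := S.val_surjective (n - m)
  have : S.shell m = (Equiv.mulLeft₀ c hc) ⁻¹' S.shell n := by
    ext x
    by_cases hx : x = 0
    · simp [shell, hx]
    · simp only [shell, Set.mem_ofPred_eq, Set.mem_preimage, Equiv.mulLeft₀_apply,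
        S.val_mul c x hc hx, hv, ne_eq,
        mul_eq_zero, hc, hx, or_self, not_false_eq_true, true_and]
      omega
  rw [this]
  exact nullMeasurable_preimage (fun s => S.mus_mul_invariant c hc s) h
    (by rw [mu_shell]; exact ENNReal.one_ne_top)

lemma tInt_zero (a b z y x s : F) : S.tInt a b z y x s 0 = 0 := by
  unfold tInt
  split_ifs <;> simp [A]

lemma tInt_of_ne {a b : F} (ha : a ≠ 0) (hb : b ≠ 0) (z y x s : F) {t : F} (ht : t ≠ 0) :
    S.tInt a b z y x s t = if S.val t ∈ S.range a b ∧ S.Cond a b (S.val t) z y x s then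
      ((((S.q : ℝ) ^ (-S.val t)) ^ 2 : ℝ) : ℂ) * S.ψ (S.phase a b z y x) else 0 := by
  have h1 : ∀ w : F, S.inO (t * w) ↔ w ∈ S.pid (-S.val t) := fun w => by
    rw [← zero_sub]; exact S.mul_mem_pid_iff ht
  have h2 : ∀ w : F, S.inO (t⁻¹ * w) ↔ w ∈ S.pid (S.val t) := fun w => by
    have := S.mul_mem_pid_iff (inv_ne_zero ht) (i := 0) (x := w)
    rwa [S.val_inv ht, zero_sub, neg_neg] at this
  have h3 : S.inO t ↔ 0 ≤ S.val t := by simp [inO, ht]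
  have h4 : a ∈ S.pid (S.val t) ↔ S.val t ≤ S.val a := by simp [pid, ha]
  have h5 : b ∈ S.pid (S.val t) ↔ S.val t ≤ S.val b := by simp [pid, hb]
  have h6 : S.inO (0 : F) := Or.inl rfl
  unfold tInt
  simp only [h1, h2, h3, h4, h5, h6, true_and, A, if_neg ht]
  refine if_congr ?_ (by push_cast; rfl) rfl
  simp only [range, Cond, Finset.mem_Icc, le_min_iff]
  tauto

lemma integral_tInt {a b : F} (ha : a ≠ 0) (hb : b ≠ 0)
    (hm : ∀ n, NullMeasurableSet (S.shell n) S.μs) (z y x s : F) :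
    ∫ t, S.tInt a b z y x s t ∂S.μs = S.tSum a b z y x s := by
  set c : ℤ → ℂ := fun n => (((if S.Cond a b n z y x s then ((S.q : ℝ) ^ (-n)) ^ 2 else 0 : ℝ)) : ℂ)
    * S.ψ (S.phase a b z y x) with hc
  have hfun : S.tInt a b z y x s =
      fun t => ∑ n ∈ S.range a b, (S.shell n).indicator (fun _ => c n) t := by
    ext t
    by_cases ht : t = 0
    · subst ht
      rw [S.tInt_zero, Finset.sum_eq_zero]
      exact fun n _ => Set.indicator_of_notMem (fun h : (0 : F) ∈ S.shell n => h.1 rfl) _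
    rw [S.tInt_of_ne ha hb z y x s ht]
    by_cases hr : S.val t ∈ S.range a b
    · rw [Finset.sum_eq_single_of_mem _ hr,
        Set.indicator_of_mem (show t ∈ S.shell (S.val t) from ⟨ht, rfl⟩)]
      · by_cases hC : S.Cond a b (S.val t) z y x s <;> simp [hc, hC, hr]
      · exact fun n _ hn => Set.indicator_of_notMem
          (fun h : t ∈ S.shell n => hn h.2.symm) _
    · rw [if_neg (fun h => hr h.1), Finset.sum_eq_zero]
      exact fun n hn => Set.indicator_of_notMem
        (fun h : t ∈ S.shell n => hr (h.2 ▸ hn)) _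
  have hint : ∀ n ∈ S.range a b, Integrable ((S.shell n).indicator fun _ => c n) S.μs :=
    fun n _ => IntegrableOn.integrable_indicator₀
      (integrableOn_const (by rw [mu_shell]; exact ENNReal.one_ne_top)) (hm n)
  rw [hfun, integral_finsetSum _ hint, tSum]
  push_cast
  rw [Finset.sum_mul]
  refine Finset.sum_congr rfl fun n _ => ?_
  rw [integral_indicator₀ (hm n), setIntegral_const, measureReal_def, mu_shell]
  simp [hc]

/-- If no shell is measurable then, since the level sets of the integrand in `t` are shells,
the integral over `t` takes its default value `0`. -/
lemma integral_tInt_eq_zero {a b : F} (ha : a ≠ 0) (hb : b ≠ 0)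
    (hm : ¬ ∃ n, NullMeasurableSet (S.shell n) S.μs) (z y x s : F) :
    ∫ t, S.tInt a b z y x s t ∂S.μs = 0 := by
  by_cases h0 : ∀ t, S.tInt a b z y x s t = 0
  · simp [h0]
  push Not at h0
  obtain ⟨t₀, h0⟩ := h0
  refine integral_non_aestronglyMeasurable fun hmeas => hm ⟨S.val t₀, ?_⟩
  have h1 := hmeas.nullMeasurableSet_eq_fun
    (aestronglyMeasurable_const (b := S.tInt a b z y x s t₀))
  convert h1 using 1
  ext t
  have ht₀ : t₀ ≠ 0 := by rintro rfl; exact h0 (S.tInt_zero _ _ _ _ _ _)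
  constructor
  · rintro ⟨ht, hv⟩
    rw [Set.mem_ofPred_eq, S.tInt_of_ne ha hb z y x s ht, S.tInt_of_ne ha hb z y x s ht₀, hv]
  · intro ht
    rw [Set.mem_ofPred_eq] at ht
    have ht0 : t ≠ 0 := by
      rintro rfl; rw [S.tInt_zero] at ht; exact h0 ht.symm
    refine ⟨ht0, ?_⟩
    have hne := ht.symm ▸ h0
    rw [S.tInt_of_ne ha hb z y x s ht0] at ht hne
    rw [S.tInt_of_ne ha hb z y x s ht₀] at ht h0
    have hc : S.val t ∈ S.range a b ∧ S.Cond a b (S.val t) z y x s := by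
      by_contra h
      rw [if_neg h] at hne
      exact hne rfl
    have hc₀ : S.val t₀ ∈ S.range a b ∧ S.Cond a b (S.val t₀) z y x s := by
      by_contra h
      rw [if_neg h] at h0
      exact h0 rfl
    rw [if_pos hc, if_pos hc₀] at ht
    have h2 := mul_right_cancel₀ (S.psi_ne_zero _) ht
    have hq := S.q_pos
    have h3 : (S.q : ℝ) ^ (-S.val t) = (S.q : ℝ) ^ (-S.val t₀) :=
      (pow_left_inj₀ (by positivity) (by positivity) two_ne_zero).1 (by exact_mod_cast h2)
    have h4 := zpow_right_injective₀ hq (by exact_mod_cast S.one_lt_q.ne') h3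
    exact neg_injective h4

/-- In each of the variables the conditions cut out a ball; so if no ball is measurable then the
integral over `s` takes its default value `0`. -/
lemma integral_tSum_eq_zero {a b : F} (ha : a ≠ 0) (hb : b ≠ 0)
    (hm : ¬ ∃ j, NullMeasurableSet (S.pid j) S.μ) (z y x : F) :
    ∫ s, S.tSum a b z y x s ∂S.μ = 0 := by
  by_cases h0 : ∀ s, S.tSum a b z y x s = 0
  · simp [h0]
  push Not at h0
  obtain ⟨s₀, h0⟩ := h0
  refine integral_non_aestronglyMeasurable fun hmeas => ?_
  have hq := S.q_pos
  have hne : ∀ s, S.tSum a b z y x s ≠ 0 ↔ ∃ n ∈ S.range a b, S.Cond a b n z y x s := by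
    intro s
    rw [tSum, mul_ne_zero_iff, and_iff_left (S.psi_ne_zero _), Complex.ofReal_ne_zero, ne_eq,
      Finset.sum_eq_zero_iff_of_nonneg (fun n _ => by split_ifs <;> positivity)]
    push Not
    refine exists_congr fun n => and_congr_right fun _ => ?_
    by_cases hC : S.Cond a b n z y x s <;> simp [hC, hq.ne', zpow_ne_zero]
  set κ := x * b + y * S.ρ ^ 2 * a with hκ
  obtain ⟨n₀, hn₀, hC₀⟩ := (hne s₀).1 h0
  -- the largest admissible `n` gives the weakest conditions on `s`
  obtain ⟨m, hmem, hmax⟩ := Finset.exists_max_image ((S.range a b).filter fun n => κ ∈ S.pid n)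
    id ⟨n₀, Finset.mem_filter.2 ⟨hn₀, hC₀.2.2.1⟩⟩
  rw [Finset.mem_filter] at hmem
  have hup : ∀ n ∈ S.range a b, ∀ s, S.Cond a b n z y x s → S.Cond a b m z y x s := by
    intro n hn s hC
    have hnm : n ≤ m := hmax n (Finset.mem_filter.2 ⟨hn, hC.2.2.1⟩)
    exact ⟨pid_mono (by omega) hC.1, pid_mono (by omega) hC.2.1, hmem.2,
      pid_mono (by omega) hC.2.2.2⟩
  have hset : {s | S.tSum a b z y x s = 0}ᶜ = {s | S.Cond a b m z y x s} := by
    ext s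
    rw [Set.mem_compl_iff, Set.mem_ofPred_eq, ← ne_eq, hne]
    exact ⟨fun ⟨n, hn, hC⟩ => hup n hn s hC, fun hC => ⟨m, hmem.1, hC⟩⟩
  have hnull : NullMeasurableSet {s | S.Cond a b m z y x s} S.μ := by
    rw [← hset]
    exact (hmeas.nullMeasurableSet_eq_fun aestronglyMeasurable_const).compl
  have hCs := hup n₀ hn₀ s₀ hC₀
  -- the set of admissible `s` is the coset of a ball through `s₀`
  obtain ⟨j, hj⟩ : ∃ j, ∀ u, u ∈ S.pid j ↔
      a * u ∈ S.pid (-m) ∧ b * u ∈ S.pid (-m) ∧ κ * u ∈ S.pid (-m) := by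
    have hmax' : ∀ (i j : ℤ) (u : F), u ∈ S.pid (max i j) ↔ u ∈ S.pid i ∧ u ∈ S.pid j := by
      intro i j u
      simp only [mem_pid, max_le_iff]
      tauto
    by_cases hk : κ = 0
    · exact ⟨max (-m - S.val a) (-m - S.val b), fun u => by
        rw [hmax', S.mul_mem_pid_iff ha, S.mul_mem_pid_iff hb, hk, zero_mul]
        simp [zero_mem_pid]⟩
    · exact ⟨max (-m - S.val a) (max (-m - S.val b) (-m - S.val κ)), fun u => by
        rw [hmax', hmax', S.mul_mem_pid_iff ha, S.mul_mem_pid_iff hb, S.mul_mem_pid_iff hk]⟩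
  apply hm
  refine ⟨j, S.nullMeasurable_of_coset (r := s₀) ?_⟩
  convert hnull using 1
  ext s
  have hiff : ∀ {u v : F}, v ∈ S.pid (-m) → (u - v ∈ S.pid (-m) ↔ u ∈ S.pid (-m)) :=
    fun {u v} hv => ⟨fun h => by simpa using pid_add h hv, fun h => pid_sub h hv⟩
  have e1 := hiff (u := x + a * s) hCs.1
  have e2 := hiff (u := b * s - y) hCs.2.1
  have e3 := hiff (u := κ * s - (x * y + z * S.ρ)) hCs.2.2.2
  rw [show x + a * s - (x + a * s₀) = a * (s - s₀) by ring] at e1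
  rw [show b * s - y - (b * s₀ - y) = b * (s - s₀) by ring] at e2
  rw [show κ * s - (x * y + z * S.ρ) - (κ * s₀ - (x * y + z * S.ρ)) = κ * (s - s₀) by ring] at e3
  rw [coset, Set.mem_ofPred_eq, hj, e1, e2, e3, Set.mem_ofPred_eq, Cond]
  have := hmem.2
  tauto


/-! ### Bounds on the domain and periodicity -/

/-- The domain of integration lies in `𝔭^(-bd)` in each of `z, y, x, s`. -/
def bd (a b : F) : ℤ := S.val a + S.val b

/-- `1 - ρ` is a unit, since it divides `3` and `3` is one. -/
lemma mem_of_one_sub_rho {j : ℤ} (hm : NullMeasurableSet (S.pid j) S.μ) {i : ℤ} {v : F}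
    (h : (1 - S.ρ) * v ∈ S.pid i) : v ∈ S.pid i := by
  have h1 : (1 - S.ρ ^ 2) * ((1 - S.ρ) * v) ∈ S.pid (0 + i) :=
    pid_mul (pid_sub S.one_mem_pid S.rho_sq_mem_pid) h
  have h3 := S.unit_three hm
  rw [show (1 - S.ρ ^ 2) * ((1 - S.ρ) * v) = 3 * v by
    linear_combination v * (S.ρ - 2) * S.rho_prim_cubic, S.mul_mem_pid_iff h3.1, h3.2] at h1
  simpa using h1

lemma mem_range {a b : F} {n : ℤ} : n ∈ S.range a b ↔ 0 ≤ n ∧ n ≤ S.val a ∧ n ≤ S.val b := by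
  simp [range]

/-- The first two conditions give `bx + ay ∈ O`, the third gives `bx + ρ²ay ∈ O`. As `1 - ρ²` is
a unit, both `bx` and `ay` are integral. -/
lemma integral_of_conds {j : ℤ} (hm : NullMeasurableSet (S.pid j) S.μ) {a b : F} {n : ℤ}
    (hn : n ∈ S.range a b) {y x s : F} (h1 : x + a * s ∈ S.pid (-n))
    (h2 : b * s - y ∈ S.pid (-n)) (h3 : x * b + y * S.ρ ^ 2 * a ∈ S.pid n) :
    b * x ∈ S.pid 0 ∧ a * y ∈ S.pid 0 := by
  rw [mem_range] at hn
  have e1 : b * (x + a * s) ∈ S.pid 0 :=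
    pid_mono (by omega) (pid_mul (S.self_mem_pid b) h1)
  have e2 : a * (b * s - y) ∈ S.pid 0 :=
    pid_mono (by omega) (pid_mul (S.self_mem_pid a) h2)
  have e3 := pid_sub (pid_sub e1 e2) (pid_mono hn.1 h3)
  have e4 : a * y ∈ S.pid 0 := by
    apply S.mem_of_one_sub_rho hm
    have h5 := pid_mul (pid_neg S.rho_mem_pid) e3
    rw [add_zero] at h5
    convert h5 using 1
    linear_combination (1 - S.ρ) * a * y * S.rho_prim_cubic
  refine ⟨?_, e4⟩
  have := pid_sub (pid_sub e1 e2) e4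
  rwa [show b * (x + a * s) - a * (b * s - y) - a * y = b * x by ring] at this

lemma bounds_of_conds {j : ℤ} (hm : NullMeasurableSet (S.pid j) S.μ) {a b : F} (ha : a ≠ 0)
    (hb : b ≠ 0) {n : ℤ} (hn : n ∈ S.range a b) {y x s : F} (h1 : x + a * s ∈ S.pid (-n))
    (h2 : b * s - y ∈ S.pid (-n)) (h3 : x * b + y * S.ρ ^ 2 * a ∈ S.pid n) :
    x ∈ S.pid (-S.val b) ∧ y ∈ S.pid (-S.val a) ∧ s ∈ S.pid (-S.bd a b) ∧
      (x * b + y * S.ρ ^ 2 * a) * s - x * y ∈ S.pid (-S.bd a b) := by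
  obtain ⟨hx, hy⟩ := S.integral_of_conds hm hn h1 h2 h3
  rw [S.mul_mem_pid_iff hb, zero_sub] at hx
  rw [S.mul_mem_pid_iff ha, zero_sub] at hy
  rw [mem_range] at hn
  have has : a * s ∈ S.pid (-S.val b) := by
    have := pid_sub (pid_mono (by omega) h1) hx
    rwa [add_sub_cancel_left] at this
  have hbs : b * s ∈ S.pid (-S.val a) := by
    have := pid_add (pid_mono (by omega) h2) hy
    rwa [sub_add_cancel] at this
  refine ⟨hx, hy, ?_, ?_⟩
  · rw [S.mul_mem_pid_iff ha] at has
    exact pid_mono (by unfold bd; omega) has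
  · have e1 := pid_mul hx hbs
    have e2 := pid_mul S.rho_sq_mem_pid (pid_mul has hy)
    have e3 := pid_mul hx hy
    have := pid_sub (pid_add (pid_mono (j := -S.bd a b) (by unfold bd; omega) e1)
      (pid_mono (by unfold bd; omega) e2)) (pid_mono (by unfold bd; omega) e3)
    convert this using 1
    ring

lemma mem_of_rho_mul {i : ℤ} {z : F} : z * S.ρ ∈ S.pid i ↔ z ∈ S.pid i := by
  rw [mul_comm, S.mul_mem_pid_iff S.rho_ne_zero, S.val_rho, sub_zero]

lemma Cond_support {j : ℤ} (hm : NullMeasurableSet (S.pid j) S.μ) {a b : F} (ha : a ≠ 0)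
    (hb : b ≠ 0) {n : ℤ} (hn : n ∈ S.range a b) {z y x s : F} (h : S.Cond a b n z y x s) :
    z ∈ S.pid (-S.bd a b) ∧ y ∈ S.pid (-S.bd a b) ∧ x ∈ S.pid (-S.bd a b) ∧
      s ∈ S.pid (-S.bd a b) := by
  obtain ⟨h1, h2, h3, h4⟩ := h
  obtain ⟨hx, hy, hs, hC⟩ := S.bounds_of_conds hm ha hb hn h1 h2 h3
  rw [mem_range] at hn
  refine ⟨?_, pid_mono (by unfold bd; omega) hy, pid_mono (by unfold bd; omega) hx, hs⟩
  rw [← mem_of_rho_mul]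
  have := pid_sub hC (pid_mono (by unfold bd; omega) h4)
  convert this using 1
  ring

lemma tSum_support {j : ℤ} (hm : NullMeasurableSet (S.pid j) S.μ) {a b : F} (ha : a ≠ 0)
    (hb : b ≠ 0) {z y x s : F} (h : ¬ (z ∈ S.pid (-S.bd a b) ∧ y ∈ S.pid (-S.bd a b) ∧
      x ∈ S.pid (-S.bd a b) ∧ s ∈ S.pid (-S.bd a b))) : S.tSum a b z y x s = 0 := by
  rw [tSum, Finset.sum_eq_zero, Complex.ofReal_zero, zero_mul]
  exact fun n hn => if_neg fun hC => h (S.Cond_support hm ha hb hn hC)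

section periodicity

variable {S} {a b z y x s z' y' x' s' : F}

/-- The congruence on `𝔭^(-L)` modulo `𝔭^(2L)`, where `L = bd a b`. -/
abbrev Near (S : CubicSetup F) (a b x x' : F) : Prop := S.Cg (3 * S.bd a b) (-S.bd a b) x x'

lemma cg_coeff {d : ℤ} {c : F} (hc : 0 ≤ S.val c) : S.Cg d 0 c c :=
  Cg.const (pid_mono hc (S.self_mem_pid c))

lemma Cond_congr (ha : 0 ≤ S.val a) (hb : 0 ≤ S.val b) {n : ℤ} (hn : n ∈ S.range a b)
    (hz : Near S a b z z') (hy : Near S a b y y') (hx : Near S a b x x')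
    (hs : Near S a b s s') : S.Cond a b n z y x s ↔ S.Cond a b n z' y' x' s' := by
  rw [mem_range] at hn
  have hρ : S.Cg (3 * S.bd a b) 0 S.ρ S.ρ := Cg.const S.rho_mem_pid
  have hρ2 : S.Cg (3 * S.bd a b) 0 (S.ρ ^ 2) (S.ρ ^ 2) := Cg.const S.rho_sq_mem_pid
  have hA : S.Cg (3 * S.bd a b) 0 a a := cg_coeff ha
  have hB : S.Cg (3 * S.bd a b) 0 b b := cg_coeff hb
  have hL : S.bd a b = S.val a + S.val b := rfl
  have e1 := hx.add ((hA.mul hs).mono (l := -S.bd a b) (by omega))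
  have e2 := ((hB.mul hs).mono (l := -S.bd a b) (by omega)).sub hy
  have e3 := ((hx.mul hB).mono (l := -S.bd a b) (by omega)).add
    (((hy.mul hρ2).mul hA).mono (by omega))
  have e4 := ((e3.mul hs).mono (l := -2 * S.bd a b) (by omega)).sub
    (((hx.mul hy).mono (by omega)).add ((hz.mul hρ).mono (by omega)))
  exact and_congr (e1.mem_iff (by omega)) (and_congr (e2.mem_iff (by omega))
    (and_congr (e3.mem_iff (by omega)) (e4.mem_iff (by omega))))

lemma psi_phase_congr (ha : 0 ≤ S.val a) (hb : 0 ≤ S.val b)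
    (hz : Near S a b z z') (hy : Near S a b y y') (hx : Near S a b x x') :
    S.ψ (S.phase a b z y x) = S.ψ (S.phase a b z' y' x') := by
  have hρ : S.Cg (3 * S.bd a b) 0 S.ρ S.ρ := Cg.const S.rho_mem_pid
  have hρ2 : S.Cg (3 * S.bd a b) 0 (S.ρ ^ 2) (S.ρ ^ 2) := Cg.const S.rho_sq_mem_pid
  have h2 : S.Cg (3 * S.bd a b) 0 2 2 := Cg.const S.two_mem_pid
  have hA : S.Cg (3 * S.bd a b) 0 a a := cg_coeff ha
  have hB : S.Cg (3 * S.bd a b) 0 b b := cg_coeff hb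
  have hL : S.bd a b = S.val a + S.val b := rfl
  have e1 := ((hx.mul hy).mono (l := -2 * S.bd a b) (by omega)).sub (hz.mono (by omega))
  have e2 := (((h2.mul hA).mul e1).mul hy).mul hρ2
  have e3 := (((h2.mul hB).mul hx).mul hz).mul hρ
  exact ((((hx.add hy).mono (l := -3 * S.bd a b) (by omega)).add (e2.mono (by omega))).sub
    (e3.mono (by omega))).psi_eq (by omega)

lemma tSum_congr (ha : 0 ≤ S.val a) (hb : 0 ≤ S.val b)
    (hz : Near S a b z z') (hy : Near S a b y y') (hx : Near S a b x x')
    (hs : Near S a b s s') : S.tSum a b z y x s = S.tSum a b z' y' x' s' := by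
  rw [tSum, tSum, psi_phase_congr ha hb hz hy hx]
  congr 2
  exact Finset.sum_congr rfl fun n hn => by
    simp only [Cond_congr ha hb hn hz hy hx hs]

end periodicity

lemma Iab_eq_tSum {a b : F} (ha : a ≠ 0) (hb : b ≠ 0)
    (hms : ∀ n, NullMeasurableSet (S.shell n) S.μs) :
    S.Iab a b = ∫ z, ∫ y, ∫ x, ∫ s, S.tSum a b z y x s ∂S.μ ∂S.μ ∂S.μ ∂S.μ := by
  simp_rw [← S.integral_tInt ha hb hms]
  rfl

/-- All the integrals over `F` are finite sums over representatives `R` of `𝔭^(-L)` modulo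
`𝔭^(2L)`. -/
lemma Iab_eq_sum {j : ℤ} (hm : NullMeasurableSet (S.pid j) S.μ)
    (hms : ∀ n, NullMeasurableSet (S.shell n) S.μs) {a b : F} (ha : a ≠ 0)
    (hb : b ≠ 0) (ha0 : 0 ≤ S.val a) (hb0 : 0 ≤ S.val b) {R : Finset F}
    (hR : S.IsReps (-S.bd a b) (2 * S.bd a b) R) :
    S.Iab a b = (((S.q : ℝ) ^ (-(2 * S.bd a b)) : ℝ) : ℂ) ^ 4 *
      ∑ z ∈ R, ∑ y ∈ R, ∑ x ∈ R, ∑ s ∈ R, S.tSum a b z y x s := by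
  set Q : ℂ := (((S.q : ℝ) ^ (-(2 * S.bd a b)) : ℝ) : ℂ)
  have hL : S.bd a b = S.val a + S.val b := rfl
  have hle : -S.bd a b ≤ 2 * S.bd a b := by omega
  have near : ∀ {u v : F}, u ∈ S.pid (-S.bd a b) → v ∈ S.pid (-S.bd a b) →
      u - v ∈ S.pid (2 * S.bd a b) → Near S a b u v :=
    fun hu hv h => ⟨hu, hv, pid_mono (by omega) h⟩
  have refl : ∀ {u : F}, u ∈ S.pid (-S.bd a b) → Near S a b u u := fun hu => Cg.const hu
  have supp := fun {z y x s} => S.tSum_support hm ha hb (z := z) (y := y) (x := x) (s := s)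
  -- Outside `𝔭^(-L)` in any variable both sides vanish, so congruence in one variable suffices.
  have hs : ∀ z y x, ∫ s, S.tSum a b z y x s ∂S.μ = Q * ∑ s ∈ R, S.tSum a b z y x s := by
    intro z y x
    refine hR.integral_eq S hm hle _ (fun s h => supp (by tauto)) fun s h s' h' hd => ?_
    by_cases hall : z ∈ S.pid (-S.bd a b) ∧ y ∈ S.pid (-S.bd a b) ∧ x ∈ S.pid (-S.bd a b)
    · exact tSum_congr ha0 hb0 (refl hall.1) (refl hall.2.1) (refl hall.2.2) (near h h' hd)
    · rw [supp (by tauto), supp (by tauto)]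
  have hx : ∀ z y, ∫ x, ∑ s ∈ R, S.tSum a b z y x s ∂S.μ =
      Q * ∑ x ∈ R, ∑ s ∈ R, S.tSum a b z y x s := by
    intro z y
    refine hR.integral_eq S hm hle _
      (fun x h => Finset.sum_eq_zero fun s _ => supp (by tauto))
      fun x h x' h' hd => Finset.sum_congr rfl fun s hs => ?_
    by_cases hall : z ∈ S.pid (-S.bd a b) ∧ y ∈ S.pid (-S.bd a b)
    · exact tSum_congr ha0 hb0 (refl hall.1) (refl hall.2) (near h h' hd) (refl (hR.1 s hs))
    · rw [supp (by tauto), supp (by tauto)]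
  have hy : ∀ z, ∫ y, ∑ x ∈ R, ∑ s ∈ R, S.tSum a b z y x s ∂S.μ =
      Q * ∑ y ∈ R, ∑ x ∈ R, ∑ s ∈ R, S.tSum a b z y x s := by
    intro z
    refine hR.integral_eq S hm hle _
      (fun y h => Finset.sum_eq_zero fun x _ => Finset.sum_eq_zero fun s _ => supp (by tauto))
      fun y h y' h' hd => Finset.sum_congr rfl fun x hx => Finset.sum_congr rfl fun s hs => ?_
    by_cases hall : z ∈ S.pid (-S.bd a b)
    · exact tSum_congr ha0 hb0 (refl hall) (near h h' hd) (refl (hR.1 x hx)) (refl (hR.1 s hs))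
    · rw [supp (by tauto), supp (by tauto)]
  have hz : ∫ z, ∑ y ∈ R, ∑ x ∈ R, ∑ s ∈ R, S.tSum a b z y x s ∂S.μ =
      Q * ∑ z ∈ R, ∑ y ∈ R, ∑ x ∈ R, ∑ s ∈ R, S.tSum a b z y x s :=
    hR.integral_eq S hm hle _
      (fun z h => Finset.sum_eq_zero fun y _ => Finset.sum_eq_zero fun x _ =>
        Finset.sum_eq_zero fun s _ => supp (by tauto))
      fun z h z' h' hd => Finset.sum_congr rfl fun y hy => Finset.sum_congr rfl fun x hx =>
        Finset.sum_congr rfl fun s hs => tSum_congr ha0 hb0 (near h h' hd) (refl (hR.1 y hy))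
          (refl (hR.1 x hx)) (refl (hR.1 s hs))
  rw [S.Iab_eq_tSum ha hb hms]
  simp_rw [hs, integral_const_mul, hx, integral_const_mul, hy, integral_const_mul, hz]
  ring

/-! ### Summation over `z` -/

/-- The function of `(y, x, s)` left after summing over `z`: the integrality conditions become
symmetric in `(a, x)` and `(b, y)`, and the phase is antisymmetric. -/
def reduced (a b : F) (n : ℤ) (y x s : F) : ℂ :=
  if x + a * s ∈ S.pid (-n) ∧ b * s - y ∈ S.pid (-n) ∧ b * x ∈ S.pid n ∧ a * y ∈ S.pid n then
    S.ψ (x + y - 2 * a * (x * y * y) + 2 * b * (x * x * y) -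
      2 * ((b * b * (x * x) - a * b * (x * y) + a * a * (y * y)) * s))
  else 0

/-- The number of representatives in `R` lying in `𝔭^(-n)`. -/
def weight (R : Finset F) (n : ℤ) : ℂ := ∑ z ∈ R, if z ∈ S.pid (-n) then 1 else 0

lemma reduced_congr {a b y x s y' x' s' : F} (ha : 0 ≤ S.val a) (hb : 0 ≤ S.val b) {n : ℤ}
    (hn : n ∈ S.range a b) (hy : Near S a b y y') (hx : Near S a b x x')
    (hs : Near S a b s s') : S.reduced a b n y x s = S.reduced a b n y' x' s' := by
  rw [mem_range] at hn
  have h2 : S.Cg (3 * S.bd a b) 0 2 2 := Cg.const S.two_mem_pid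
  have hA : S.Cg (3 * S.bd a b) 0 a a := cg_coeff ha
  have hB : S.Cg (3 * S.bd a b) 0 b b := cg_coeff hb
  have hL : S.bd a b = S.val a + S.val b := rfl
  have e1 := hx.add ((hA.mul hs).mono (l := -S.bd a b) (by omega))
  have e2 := ((hB.mul hs).mono (l := -S.bd a b) (by omega)).sub hy
  have e3 := hB.mul hx
  have e4 := hA.mul hy
  have p1 := ((h2.mul hA).mul ((hx.mul hy).mul hy)).mono (l := -3 * S.bd a b) (by omega)
  have p2 := ((h2.mul hB).mul ((hx.mul hx).mul hy)).mono (l := -3 * S.bd a b) (by omega)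
  have p3 := ((((hB.mul hB).mul (hx.mul hx)).mono (l := -2 * S.bd a b) (by omega)).sub
    (((hA.mul hB).mul (hx.mul hy)).mono (by omega))).add
    (((hA.mul hA).mul (hy.mul hy)).mono (by omega))
  have p4 := (h2.mul (p3.mul hs)).mono (l := -3 * S.bd a b) (by omega)
  have p := ((((hx.add hy).mono (l := -3 * S.bd a b) (by omega)).sub p1).add p2).sub p4
  unfold reduced
  rw [p.psi_eq (by omega)]
  exact if_congr (and_congr (e1.mem_iff (by omega)) (and_congr (e2.mem_iff (by omega))
    (and_congr (e3.mem_iff (by omega)) (e4.mem_iff (by omega))))) rfl rfl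

/-- Orthogonality of characters on `𝔭^(-n)`. -/
lemma sum_psi {L : ℤ} {R : Finset F} (hR : S.IsReps (-L) (2 * L) R) {n : ℤ} (hn : 0 ≤ n)
    (hnL : n ≤ L) {c : F} (hc : c ∈ S.pid (-2 * L)) :
    (∑ z ∈ R, if z ∈ S.pid (-n) then S.ψ (c * z) else 0) =
      if c ∈ S.pid n then S.weight R n else 0 := by
  split_ifs with h
  · refine Finset.sum_congr rfl fun z _ => ?_
    split_ifs with hz
    · exact S.psi_of_mem (by simpa using pid_mul h hz)
    · rfl
  · obtain ⟨u, hu, hψ⟩ : ∃ u ∈ S.pid (-n), S.ψ (c * u) ≠ 1 := by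
      by_contra hcon
      push Not at hcon
      exact h (S.psi_conductor hcon)
    have key := hR.sum_add S (pid_mono (by omega) hu)
      (fun z => if z ∈ S.pid (-n) then S.ψ (c * z) else 0) fun z hz z' hz' hd => by
        have h1 : z ∈ S.pid (-n) ↔ z' ∈ S.pid (-n) :=
          ⟨fun h => by simpa using pid_sub h (pid_mono (by omega) hd),
            fun h => by simpa using pid_add h (pid_mono (by omega) hd)⟩
        have h2 : S.ψ (c * z) = S.ψ (c * z') := S.psi_congr (by
          rw [← mul_sub]; exact pid_mono (by omega) (pid_mul hc hd))
        simp only [h1, h2]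
    have shift : ∀ z, (if z + u ∈ S.pid (-n) then S.ψ (c * (z + u)) else 0) =
        S.ψ (c * u) * if z ∈ S.pid (-n) then S.ψ (c * z) else 0 := fun z => by
      have h1 : z + u ∈ S.pid (-n) ↔ z ∈ S.pid (-n) :=
        ⟨fun h => by simpa using pid_sub h hu, fun h => pid_add h hu⟩
      simp only [h1, mul_add, S.psi_add, mul_comm (S.ψ (c * u)), ite_mul, zero_mul]
    simp only [shift, ← Finset.mul_sum] at key
    by_contra h0
    exact hψ ((mul_eq_right₀ h0).1 key)

lemma zsum {j : ℤ} (hm : NullMeasurableSet (S.pid j) S.μ) {a b : F} (ha : a ≠ 0)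
    (hb : b ≠ 0) (ha0 : 0 ≤ S.val a) (hb0 : 0 ≤ S.val b) {R : Finset F}
    (hR : S.IsReps (-S.bd a b) (2 * S.bd a b) R) {n : ℤ} (hn : n ∈ S.range a b) {y x s : F}
    (hy : y ∈ S.pid (-S.bd a b)) (hx : x ∈ S.pid (-S.bd a b)) (hs : s ∈ S.pid (-S.bd a b)) :
    (∑ z ∈ R, if S.Cond a b n z y x s then S.ψ (S.phase a b z y x) else 0) =
      S.weight R n * S.reduced a b n y x s := by
  have hL : S.bd a b = S.val a + S.val b := rfl
  have hn' := S.mem_range.1 hn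
  have hκ : b * x ∈ S.pid n → a * y ∈ S.pid n → x * b + y * S.ρ ^ 2 * a ∈ S.pid n := by
    intro h1 h2
    have := pid_mul S.rho_sq_mem_pid h2
    rw [zero_add] at this
    convert pid_add h1 this using 1
    ring
  by_cases hP : x + a * s ∈ S.pid (-n) ∧ b * s - y ∈ S.pid (-n) ∧
      x * b + y * S.ρ ^ 2 * a ∈ S.pid n
  swap
  · rw [reduced, if_neg (fun h => hP ⟨h.1, h.2.1, hκ h.2.2.1 h.2.2.2⟩), mul_zero]
    exact Finset.sum_eq_zero fun z _ => if_neg fun h => hP ⟨h.1, h.2.1, h.2.2.1⟩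
  obtain ⟨h1, h2, h3⟩ := hP
  obtain ⟨-, -, -, hC⟩ := S.bounds_of_conds hm ha hb hn h1 h2 h3
  set C := (x * b + y * S.ρ ^ 2 * a) * s - x * y with hCdef
  set c := -(2 * S.ρ * (b * x + S.ρ * (a * y))) with hc
  have hc_mem : c ∈ S.pid (-2 * S.bd a b) := by
    have e1 := pid_mul (S.self_mem_pid b) hx
    have e2 := pid_mul S.rho_mem_pid (pid_mul (S.self_mem_pid a) hy)
    exact pid_neg (pid_mono (by omega) (pid_mul (pid_mul S.two_mem_pid S.rho_mem_pid)
      (pid_add (pid_mono (j := -S.bd a b) (by omega) e1) (pid_mono (by omega) e2))))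
  have hρC : S.ρ ^ 2 * C ∈ S.pid (-S.bd a b) := by
    simpa using pid_mul S.rho_sq_mem_pid hC
  -- the fourth condition says that `z` lies in the coset of `ρ² C` modulo `𝔭^(-n)`
  have key := hR.sum_add S hρC
    (fun z => if S.Cond a b n z y x s then S.ψ (S.phase a b z y x) else 0)
    fun z hz z' hz' hd => by
      have hnz : Near S a b z z' := ⟨hz, hz', pid_mono (by omega) hd⟩
      simp only [Cond_congr ha0 hb0 hn hnz (Cg.const hy) (Cg.const hx) (Cg.const hs),
        psi_phase_congr ha0 hb0 hnz (Cg.const hy) (Cg.const hx)]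
  set P := x + y + 2 * a * S.ρ ^ 2 * (x * y * y) + c * (S.ρ ^ 2 * C) with hP
  have shift : ∀ z, (if S.Cond a b n (z + S.ρ ^ 2 * C) y x s then
      S.ψ (S.phase a b (z + S.ρ ^ 2 * C) y x) else 0) =
      S.ψ P * if z ∈ S.pid (-n) then S.ψ (c * z) else 0 := fun z => by
    have e1 : S.Cond a b n (z + S.ρ ^ 2 * C) y x s ↔ z ∈ S.pid (-n) := by
      rw [Cond, and_iff_right h1, and_iff_right h2, and_iff_right h3,
        ← S.mem_of_rho_mul (z := z), ← S.pid_neg_iff (x := z * S.ρ)]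
      refine iff_of_eq (congrArg (· ∈ S.pid (-n)) ?_)
      linear_combination -C * S.rho_cube + hCdef
    have e2 : S.phase a b (z + S.ρ ^ 2 * C) y x = P + c * z := by
      rw [phase, hP, hc]
      ring
    simp only [e1, e2, S.psi_add, mul_ite, mul_zero]
  rw [← key]
  simp only [shift]
  rw [← Finset.mul_sum, S.sum_psi hR hn'.1 (by omega) hc_mem]
  -- `bx + ρ²ay` and `bx + ρay` both lie in `𝔭^n` exactly when `bx` and `ay` do
  have hiff : c ∈ S.pid n ↔ b * x ∈ S.pid n ∧ a * y ∈ S.pid n := by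
    have h20 := S.unit_two hm
    rw [hc, S.pid_neg_iff, mul_assoc, S.mul_mem_pid_iff h20.1, h20.2, sub_zero,
      S.mul_mem_pid_iff S.rho_ne_zero, S.val_rho, sub_zero]
    constructor
    · intro h
      have hay : a * y ∈ S.pid n := by
        apply S.mem_of_one_sub_rho hm
        rw [← S.mem_of_rho_mul]
        convert pid_sub h h3 using 1
        ring
      refine ⟨?_, hay⟩
      have := pid_mul S.rho_mem_pid hay
      rw [zero_add] at this
      simpa using pid_sub h this
    · intro h
      have := pid_mul S.rho_mem_pid h.2
      rw [zero_add] at this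
      exact pid_add h.1 this
  have hpoly : P = x + y - 2 * a * (x * y * y) + 2 * b * (x * x * y) -
      2 * ((b * b * (x * x) - a * b * (x * y) + a * a * (y * y)) * s) := by
    rw [hP, hc, hCdef]
    linear_combination (2 * a * x * y ^ 2 * (S.ρ ^ 2 - S.ρ + 1) + 2 * b * x ^ 2 * y * (S.ρ - 1) -
      2 * (S.ρ - 1) * b ^ 2 * x ^ 2 * s - 2 * a * b * x * y * s * (S.ρ ^ 3 - S.ρ + 1) -
      2 * (S.ρ ^ 3 + 1) * (S.ρ - 1) * a ^ 2 * y ^ 2 * s) * S.rho_prim_cubic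
  simp only [reduced, h1, h2, true_and, hiff, ← hpoly, mul_ite, mul_zero, mul_comm (S.ψ P),
    ite_mul, zero_mul]

/-! ### The symmetry -/

/-- The summand of `Iab` after summation over `z`. -/
def total (R : Finset F) (a b y x s : F) : ℂ :=
  ∑ n ∈ S.range a b, ((((S.q : ℝ) ^ (-n)) ^ 2 : ℝ) : ℂ) * (S.weight R n * S.reduced a b n y x s)

lemma Iab_eq_total {j : ℤ} (hm : NullMeasurableSet (S.pid j) S.μ)
    (hms : ∀ n, NullMeasurableSet (S.shell n) S.μs) {a b : F} (ha : a ≠ 0)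
    (hb : b ≠ 0) (ha0 : 0 ≤ S.val a) (hb0 : 0 ≤ S.val b) {R : Finset F}
    (hR : S.IsReps (-S.bd a b) (2 * S.bd a b) R) :
    S.Iab a b = (((S.q : ℝ) ^ (-(2 * S.bd a b)) : ℝ) : ℂ) ^ 4 *
      ∑ y ∈ R, ∑ x ∈ R, ∑ s ∈ R, S.total R a b y x s := by
  rw [S.Iab_eq_sum hm hms ha hb ha0 hb0 hR, Finset.sum_comm]
  congr 1
  refine Finset.sum_congr rfl fun y hy => ?_
  rw [Finset.sum_comm]
  refine Finset.sum_congr rfl fun x hx => ?_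
  rw [Finset.sum_comm]
  refine Finset.sum_congr rfl fun s hs => ?_
  have : ∀ z, S.tSum a b z y x s = ∑ n ∈ S.range a b, ((((S.q : ℝ) ^ (-n)) ^ 2 : ℝ) : ℂ) *
      if S.Cond a b n z y x s then S.ψ (S.phase a b z y x) else 0 := by
    intro z
    rw [tSum, Complex.ofReal_sum, Finset.sum_mul]
    refine Finset.sum_congr rfl fun n _ => ?_
    split_ifs <;> simp
  simp only [this]
  rw [Finset.sum_comm, total]
  refine Finset.sum_congr rfl fun n hn => ?_
  rw [← Finset.mul_sum, S.zsum hm ha hb ha0 hb0 hR hn (hR.1 y hy) (hR.1 x hx) (hR.1 s hs)]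

/-- The functional equation of the integrand, under `(y, x, s) ↦ (-x, -y, -s)`. -/
lemma reduced_symm {j : ℤ} (hm : NullMeasurableSet (S.pid j) S.μ) (a b : F) (n : ℤ)
    (y x s : F) :
    S.reduced b a n y x s = (starRingEnd ℂ) (S.reduced (-a) (-b) n (-x) (-y) (-s)) := by
  unfold reduced
  rw [apply_ite (starRingEnd ℂ), map_zero, S.conj_psi hm]
  refine if_congr ?_ (congrArg S.ψ (by ring)) rfl
  rw [show -y + -a * -s = a * s - y by ring, show -b * -s - -x = x + b * s by ring,
    neg_mul_neg, neg_mul_neg]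
  tauto

lemma total_symm {j : ℤ} (hm : NullMeasurableSet (S.pid j) S.μ) (R : Finset F) (a b : F)
    (y x s : F) :
    S.total R b a y x s = (starRingEnd ℂ) (S.total R (-a) (-b) (-x) (-y) (-s)) := by
  have hw : ∀ n, (starRingEnd ℂ) (S.weight R n) = S.weight R n := fun n => by
    simp only [weight, map_sum, apply_ite (starRingEnd ℂ), map_one, map_zero]
  have hr : S.range b a = S.range (-a) (-b) := by
    rw [range, range, S.val_neg, S.val_neg, min_comm]
  rw [total, total, map_sum, hr]
  refine Finset.sum_congr rfl fun n _ => ?_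
  rw [map_mul, map_mul, hw, Complex.conj_ofReal, ← S.reduced_symm hm]

lemma sum_total_neg {a b : F} (ha0 : 0 ≤ S.val a) (hb0 : 0 ≤ S.val b) {R : Finset F}
    (hR : S.IsReps (-S.bd a b) (2 * S.bd a b) R) :
    ∑ y ∈ R, ∑ x ∈ R, ∑ s ∈ R, S.total R a b (-x) (-y) (-s) =
      ∑ y ∈ R, ∑ x ∈ R, ∑ s ∈ R, S.total R a b y x s := by
  have hL : S.bd a b = S.val a + S.val b := rfl
  have near : ∀ {u v : F}, u ∈ S.pid (-S.bd a b) → v ∈ S.pid (-S.bd a b) →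
      u - v ∈ S.pid (2 * S.bd a b) → Near S a b u v :=
    fun hu hv h => ⟨hu, hv, pid_mono (by omega) h⟩
  have refl : ∀ {u : F}, u ∈ S.pid (-S.bd a b) → Near S a b u u := fun hu => Cg.const hu
  have congr : ∀ {y y' x x' s s'}, Near S a b y y' → Near S a b x x' → Near S a b s s' →
      S.total R a b y x s = S.total R a b y' x' s' := fun hy hx hs =>
    Finset.sum_congr rfl fun n hn => by rw [S.reduced_congr ha0 hb0 hn hy hx hs]
  calc ∑ y ∈ R, ∑ x ∈ R, ∑ s ∈ R, S.total R a b (-x) (-y) (-s)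
      = ∑ y ∈ R, ∑ x ∈ R, ∑ s ∈ R, S.total R a b (-x) (-y) s :=
        Finset.sum_congr rfl fun y hy => Finset.sum_congr rfl fun x hx =>
          hR.sum_neg S (fun s => S.total R a b (-x) (-y) s) fun s hs s' hs' hd =>
            congr (refl (pid_neg (hR.1 x hx))) (refl (pid_neg (hR.1 y hy))) (near hs hs' hd)
    _ = ∑ y ∈ R, ∑ x ∈ R, ∑ s ∈ R, S.total R a b x (-y) s :=
        Finset.sum_congr rfl fun y hy =>
          hR.sum_neg S (fun x => ∑ s ∈ R, S.total R a b x (-y) s) fun x hx x' hx' hd =>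
            Finset.sum_congr rfl fun s hs =>
              congr (near hx hx' hd) (refl (pid_neg (hR.1 y hy))) (refl (hR.1 s hs))
    _ = ∑ y ∈ R, ∑ x ∈ R, ∑ s ∈ R, S.total R a b x y s :=
        hR.sum_neg S (fun y => ∑ x ∈ R, ∑ s ∈ R, S.total R a b x y s) fun y hy y' hy' hd =>
          Finset.sum_congr rfl fun x hx => Finset.sum_congr rfl fun s hs =>
            congr (refl (hR.1 x hx)) (near hy hy' hd) (refl (hR.1 s hs))
    _ = _ := Finset.sum_comm

/-! ### Degenerate cases -/

lemma Iab_eq_zero_of_shell {a b : F} (ha : a ≠ 0) (hb : b ≠ 0)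
    (hm : ¬ ∃ n, NullMeasurableSet (S.shell n) S.μs) : S.Iab a b = 0 := by
  have h : S.Iab a b = ∫ z, ∫ y, ∫ x, ∫ s, ∫ t, S.tInt a b z y x s t ∂S.μs ∂S.μ ∂S.μ ∂S.μ ∂S.μ :=
    rfl
  rw [h]
  simp [S.integral_tInt_eq_zero ha hb hm]

lemma Iab_eq_zero_of_pid {a b : F} (ha : a ≠ 0) (hb : b ≠ 0)
    (hms : ∀ n, NullMeasurableSet (S.shell n) S.μs)
    (hm : ¬ ∃ j, NullMeasurableSet (S.pid j) S.μ) : S.Iab a b = 0 := by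
  rw [S.Iab_eq_tSum ha hb hms]
  simp [S.integral_tSum_eq_zero ha hb hm]

lemma Iab_eq_zero_of_val {a b : F} (ha : a ≠ 0) (hb : b ≠ 0)
    (hms : ∀ n, NullMeasurableSet (S.shell n) S.μs)
    (hv : ¬ (0 ≤ S.val a ∧ 0 ≤ S.val b)) : S.Iab a b = 0 := by
  have hr : S.range a b = ∅ := Finset.eq_empty_of_forall_notMem fun n hn => by
    rw [mem_range] at hn
    omega
  rw [S.Iab_eq_tSum ha hb hms]
  simp [tSum, hr]

/-- The functional equation `I(b,a) = conj (I(−a,−b))`. -/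
theorem statement1 (a b : F) (ha : a ≠ 0) (hb : b ≠ 0) :
    S.Iab b a = (starRingEnd ℂ) (S.Iab (-a) (-b)) := by
  have ha' := neg_ne_zero.2 ha
  have hb' := neg_ne_zero.2 hb
  by_cases hs : ∃ n, NullMeasurableSet (S.shell n) S.μs
  swap
  · rw [S.Iab_eq_zero_of_shell hb ha hs, S.Iab_eq_zero_of_shell ha' hb' hs, map_zero]
  obtain ⟨n, hs⟩ := hs
  have hms := S.nullMeasurable_shell hs
  by_cases hm : ∃ j, NullMeasurableSet (S.pid j) S.μ
  swap
  · rw [S.Iab_eq_zero_of_pid hb ha hms hm, S.Iab_eq_zero_of_pid ha' hb' hms hm, map_zero]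
  obtain ⟨j, hm⟩ := hm
  by_cases hv : 0 ≤ S.val a ∧ 0 ≤ S.val b
  swap
  · rw [S.Iab_eq_zero_of_val hb ha hms (fun h => hv h.symm),
      S.Iab_eq_zero_of_val ha' hb' hms (by rwa [S.val_neg, S.val_neg]), map_zero]
  have hbd : S.bd b a = S.bd (-a) (-b) := by
    rw [bd, bd, S.val_neg, S.val_neg, add_comm]
  have hv' : 0 ≤ S.val (-a) ∧ 0 ≤ S.val (-b) := by rwa [S.val_neg, S.val_neg]
  obtain ⟨R, hR⟩ := S.exists_reps hm (L := -S.bd b a) (l := 2 * S.bd b a)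
    (by unfold bd; omega)
  rw [S.Iab_eq_total hm hms hb ha hv.2 hv.1 hR]
  rw [hbd] at hR ⊢
  rw [S.Iab_eq_total hm hms ha' hb' hv'.1 hv'.2 hR, ← S.sum_total_neg hv'.1 hv'.2 hR, map_mul,
    map_pow, Complex.conj_ofReal]
  simp only [map_sum, ← S.total_symm hm]

end CubicSetup
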